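/- arXiv:1606.03602 — 4 statements merged into one kernel-verified Lean document; each statement's English description precedes it below -/
import Mathlib

section
/- Let T>0, a≥0 and 0<m<sqrt((π/T)²+(a/2)²). Then there exists a continuous function G:[0,T]×[0,T]→ℝ such that: (G1) for each continuous h:[0,T]→ℝ, the function x(t)=∫₀ᵀ G(t,s)h(s) ds is the unique solution of the linear periodic problem x''(t)+a x'(t)+m² x(t)=h(t) on [0,T], x(0)=x(T), x'(0)=x'(T); (G2) G(t,s)>0 for all (t,s)∈[0,T]×[0,T]; (G3) ∫₀ᵀ G(t,s) ds = 1/m² for all t∈[0,T]; and (G4) there exists a constant c∈(0,1) such that G(t,s) ≥ G(s,s) ≥ c·G(t,s) for all (t,s)∈[0,T]×[0,T]. -/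
open Set Real

noncomputable def pd1 (T : ℝ) (x : ℝ → ℝ) : ℝ → ℝ := derivWithin x (Set.Icc 0 T)

noncomputable def pd2 (T : ℝ) (x : ℝ → ℝ) : ℝ → ℝ := derivWithin (pd1 T x) (Set.Icc 0 T)

/-- `x` is a (twice continuously differentiable) solution of the linear periodic problem
`x'' + a x' + m² x = h` on `[0,T]`, `x(0)=x(T)`, `x'(0)=x'(T)`. -/
def IsLinSol (T a m : ℝ) (h x : ℝ → ℝ) : Prop :=
  ContDiffOn ℝ 2 x (Set.Icc 0 T) ∧
  (∀ t ∈ Set.Icc 0 T, pd2 T x t + a * pd1 T x t + m ^ 2 * x t = h t) ∧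
  x 0 = x T ∧ pd1 T x 0 = pd1 T x T

/-- Property (G1): for each continuous `h`, `t ↦ ∫₀ᵀ G(t,s) h(s) ds` is the unique solution
of the linear periodic problem. -/
def PropG1 (T a m : ℝ) (G : ℝ → ℝ → ℝ) : Prop :=
  ∀ h : ℝ → ℝ, ContinuousOn h (Set.Icc 0 T) →
    IsLinSol T a m h (fun t => ∫ s in (0:ℝ)..T, G t s * h s) ∧
    ∀ x : ℝ → ℝ, IsLinSol T a m h x →
      ∀ t ∈ Set.Icc 0 T, x t = ∫ s in (0:ℝ)..T, G t s * h s

/-!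
A homogeneous solution `φ` of `x'' + a x' + m² x = 0` with `φ 0 = φ T` and `φ' 0 = φ' T + 1`
generates the Green's function: `G t s = φ (t - s)`, with `t - s` reduced modulo `T`. By Lagrange's
identity every periodic solution equals `∫ G t s * h s`, which is uniqueness; and since
`φ t - φ (t + T)` is the impulse response of the equation, variation of parameters gives a solution,
which a combination of `φ` and `φ'` makes periodic.

For a kernel put `d = a / 2`, `k = m² - d²`, and let `S`, `C` be the solutions of `y'' + k y = 0`
with Cauchy data `(0, 1)` and `(1, 0)`. Then
`φ r = exp (-d r) (exp (d T) S r + S (T - r)) / (2 (cosh (d T) - C T))`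
works, and it is positive on `[0, T]` because `k < (π / T)²` makes `S` positive on `(0, T]`. Where
`φ` is positive the equation forbids interior minima, so `φ 0 = G s s` is the minimum of `G`.
-/

theorem deriv_deriv_nonneg_of_isLocalMin {f : ℝ → ℝ} {x : ℝ} (hf : IsLocalMin f x)
    (hc : ContinuousAt f x) : 0 ≤ deriv (deriv f) x := by
  by_contra! hneg
  have hmax := isLocalMax_of_deriv_deriv_neg hneg hf.deriv_eq_zero hc
  have hconst : f =ᶠ[nhds x] fun _ => f x := by
    filter_upwards [hf, hmax] with y hle hge using hge.antisymm hle
  simp [hconst.deriv.deriv_eq] at hneg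

/-- The function `y`, with derivative `y'`, solves the equation `y'' + a y' + b y = g` on the whole
line. The derivative is carried along explicitly, so that solutions can be given by formulas. -/
def IsLinODESol (a b : ℝ) (g y y' : ℝ → ℝ) : Prop :=
  ∀ t, HasDerivAt y (y' t) t ∧ HasDerivAt y' (g t - a * y' t - b * y t) t

namespace IsLinODESol

variable {a b p q r : ℝ} {f g y y' z z' : ℝ → ℝ}

theorem continuous (hy : IsLinODESol a b g y y') : Continuous y :=
  continuous_iff_continuousAt.2 fun t => (hy t).1.continuousAt

theorem continuous_deriv (hy : IsLinODESol a b g y y') : Continuous y' :=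
  continuous_iff_continuousAt.2 fun t => (hy t).2.continuousAt

theorem deriv_eq (hy : IsLinODESol a b g y y') : deriv y = y' :=
  funext fun t => (hy t).1.deriv

theorem deriv_deriv_eq (hy : IsLinODESol a b g y y') :
    deriv (deriv y) = fun t => g t - a * y' t - b * y t := by
  rw [hy.deriv_eq]
  exact funext fun t => (hy t).2.deriv

theorem contDiff_two (hy : IsLinODESol a b g y y') (hg : Continuous g) : ContDiff ℝ 2 y := by
  have hy' : ContDiff ℝ 1 y' := by
    rw [contDiff_one_iff_deriv, ← hy.deriv_eq, hy.deriv_deriv_eq, hy.deriv_eq]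
    have hcont := hy.continuous
    have hcont' := hy.continuous_deriv
    exact ⟨fun t => (hy t).2.differentiableAt, by fun_prop⟩
  rw [← one_add_one_eq_two, contDiff_succ_iff_deriv, hy.deriv_eq]
  exact ⟨fun t => (hy t).1.differentiableAt, by simp, hy'⟩

theorem add (hy : IsLinODESol a b f y y') (hz : IsLinODESol a b g z z') :
    IsLinODESol a b (f + g) (y + z) (y' + z') := fun t =>
  ⟨(hy t).1.add (hz t).1, ((hy t).2.add (hz t).2).congr_deriv <| by
    simp only [Pi.add_apply]; ring⟩

theorem const_smul (hy : IsLinODESol a b g y y') (c : ℝ) :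
    IsLinODESol a b (c • g) (c • y) (c • y') := fun t =>
  ⟨(hy t).1.const_smul c, ((hy t).2.const_smul c).congr_deriv <| by
    simp only [Pi.smul_apply, smul_eq_mul]; ring⟩

theorem comp_add_const (hy : IsLinODESol a b g y y') (c : ℝ) :
    IsLinODESol a b (fun t => g (t + c)) (fun t => y (t + c)) (fun t => y' (t + c)) := fun t =>
  ⟨(hy (t + c)).1.comp_add_const t c, (hy (t + c)).2.comp_add_const t c⟩

theorem comp_const_sub (hy : IsLinODESol a b g y y') (c : ℝ) :
    IsLinODESol (-a) b (fun t => g (c - t)) (fun t => y (c - t)) (fun t => -y' (c - t)) := fun t =>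
  ⟨(hy (c - t)).1.comp_const_sub c t, ((hy (c - t)).2.comp_const_sub c t).neg.congr_deriv <| by
    ring⟩

theorem derivative (hy : IsLinODESol a b 0 y y') :
    IsLinODESol a b 0 y' (fun t => -a * y' t - b * y t) := fun t =>
  ⟨(hy t).2.congr_deriv <| by simp only [Pi.zero_apply]; ring,
    (((hy t).2.const_mul (-a)).sub ((hy t).1.const_mul b)).congr_deriv <| by
      simp only [Pi.zero_apply]; ring⟩

theorem exp_mul (hy : IsLinODESol a b g y y') (d : ℝ) :
    IsLinODESol (a + 2 * d) (b + a * d + d ^ 2) (fun t => exp (-d * t) * g t)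
      (fun t => exp (-d * t) * y t) (fun t => exp (-d * t) * (y' t - d * y t)) := fun t => by
  have hexp : HasDerivAt (fun t => exp (-d * t)) (exp (-d * t) * -d) t := by
    simpa using ((hasDerivAt_id' t).const_mul (-d)).exp
  exact ⟨(hexp.mul (hy t).1).congr_deriv (by ring),
    (hexp.mul ((hy t).2.sub ((hy t).1.const_mul d))).congr_deriv <| by
      simp only [Pi.sub_apply]; ring⟩

theorem exp_mul_wronskian (hy : IsLinODESol a b 0 y y') (hz : IsLinODESol a b 0 z z') (t : ℝ) :
    exp (a * t) * (y t * z' t - y' t * z t) = y 0 * z' 0 - y' 0 * z 0 := by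
  have hderiv (s : ℝ) :
      HasDerivAt (fun s => exp (a * s) * (y s * z' s - y' s * z s)) 0 s := by
    have hexp := ((hasDerivAt_id' s).const_mul a).exp
    refine (hexp.mul (((hy s).1.mul (hz s).2).sub ((hy s).2.mul (hz s).1))).congr_deriv ?_
    simp only [Pi.zero_apply, Pi.sub_apply, Pi.mul_apply]
    ring
  simpa using is_const_of_deriv_eq_zero (fun s => (hderiv s).differentiableAt)
    (fun s => (hderiv s).deriv) t 0

theorem exists_of_wronskian_ne_zero (hy : IsLinODESol a b 0 y y') (hz : IsLinODESol a b 0 z z')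
    (hW : y 0 * z' 0 - y' 0 * z 0 ≠ 0) (hg : Continuous g) :
    ∃ x x', IsLinODESol a b g x x' := by
  set W := y 0 * z' 0 - y' 0 * z 0
  have hprim {w : ℝ → ℝ} (hw : Continuous w) (t : ℝ) :
      HasDerivAt (fun t => ∫ s in (0 : ℝ)..t, exp (a * s) * w s * g s / W)
        (exp (a * t) * w t * g t / W) t := by
    have hint : Continuous fun s => exp (a * s) * w s * g s / W := by fun_prop
    exact (hint.integral_hasStrictDerivAt 0 t).hasDerivAt
  refine ⟨fun t => z t * (∫ s in (0 : ℝ)..t, exp (a * s) * y s * g s / W) -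
      y t * ∫ s in (0 : ℝ)..t, exp (a * s) * z s * g s / W,
    fun t => z' t * (∫ s in (0 : ℝ)..t, exp (a * s) * y s * g s / W) -
      y' t * ∫ s in (0 : ℝ)..t, exp (a * s) * z s * g s / W, fun t => ⟨?_, ?_⟩⟩
  · refine (((hz t).1.mul (hprim hy.continuous t)).sub
      ((hy t).1.mul (hprim hz.continuous t))).congr_deriv ?_
    ring
  · have habel : exp (a * t) * (y t * z' t - y' t * z t) / W = 1 := by
      rw [hy.exp_mul_wronskian hz t, div_self hW]
    refine (((hz t).2.mul (hprim hy.continuous t)).sub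
      ((hy t).2.mul (hprim hz.continuous t))).congr_deriv ?_
    simp only [Pi.zero_apply]
    linear_combination g t * habel

/-- At an interior minimum the equation would force `y'' < 0`. -/
theorem min_le_of_lt_mul (hy : IsLinODESol a b g y y') (hg : ∀ t ∈ Ioo p q, g t < b * y t)
    (hr : r ∈ Icc p q) : min (y p) (y q) ≤ y r := by
  obtain ⟨t, ht, hmin⟩ :=
    isCompact_Icc.exists_isMinOn ⟨r, hr⟩ hy.continuous.continuousOn
  suffices ¬ (p < t ∧ t < q) by
    rcases not_and_or.1 this with h | h
    · exact min_le_of_left_le (ht.1.antisymm (not_lt.1 h) ▸ hmin hr)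
    · exact min_le_of_right_le (ht.2.antisymm (not_lt.1 h) ▸ hmin hr)
  intro htpq
  have hloc : IsLocalMin y t := hmin.isLocalMin (Icc_mem_nhds htpq.1 htpq.2)
  have hneg : deriv (deriv y) t < 0 := by
    have hy't : y' t = 0 := hy.deriv_eq ▸ hloc.deriv_eq_zero
    simpa only [hy.deriv_deriv_eq, hy't, mul_zero, sub_zero, sub_neg] using hg t htpq
  exact hneg.not_ge <|
    deriv_deriv_nonneg_of_isLocalMin hloc hy.continuous.continuousAt

end IsLinODESol

/-- The solutions `S` and `C` of `y'' + k y = 0` with Cauchy data `(0, 1)` and `(1, 0)` at the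
origin: a common notation for the trigonometric, affine and hyperbolic cases. -/
structure IsSinCosPair (k : ℝ) (S C : ℝ → ℝ) : Prop where
  hasDerivAt_sin : ∀ x, HasDerivAt S (C x) x
  hasDerivAt_cos : ∀ x, HasDerivAt C (-(k * S x)) x
  sin_zero : S 0 = 0
  cos_zero : C 0 = 1

theorem isSinCosPair_sin {w : ℝ} (hw : w ≠ 0) :
    IsSinCosPair (w ^ 2) (fun x => sin (w * x) / w) (fun x => cos (w * x)) where
  hasDerivAt_sin x :=
    (((hasDerivAt_id' x).const_mul w).sin.div_const w).congr_deriv (by field_simp)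
  hasDerivAt_cos x := ((hasDerivAt_id' x).const_mul w).cos.congr_deriv (by field_simp)
  sin_zero := by simp
  cos_zero := by simp

theorem isSinCosPair_sinh {w : ℝ} (hw : w ≠ 0) :
    IsSinCosPair (-w ^ 2) (fun x => sinh (w * x) / w) (fun x => cosh (w * x)) where
  hasDerivAt_sin x :=
    (((hasDerivAt_id' x).const_mul w).sinh.div_const w).congr_deriv (by field_simp)
  hasDerivAt_cos x := ((hasDerivAt_id' x).const_mul w).cosh.congr_deriv (by field_simp)
  sin_zero := by simp
  cos_zero := by simp

theorem isSinCosPair_id : IsSinCosPair 0 (fun x => x) (fun _ => 1) where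
  hasDerivAt_sin := hasDerivAt_id'
  hasDerivAt_cos x := (hasDerivAt_const x 1).congr_deriv (by simp)
  sin_zero := rfl
  cos_zero := rfl

theorem exists_isSinCosPair_pos_lt_cosh {T k d : ℝ} (hT : 0 < T) (hk : k < (π / T) ^ 2)
    (hd : 0 < k + d ^ 2) :
    ∃ S C, IsSinCosPair k S C ∧ (∀ x ∈ Ioc 0 T, 0 < S x) ∧ C T < cosh (d * T) := by
  rcases lt_trichotomy k 0 with hneg | rfl | hpos
  · obtain ⟨w, hw, rfl⟩ : ∃ w, 0 < w ∧ k = -w ^ 2 :=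
      ⟨√(-k), sqrt_pos.2 (by linarith), by rw [sq_sqrt (by linarith)]; ring⟩
    refine ⟨_, _, isSinCosPair_sinh hw.ne', fun x hx => ?_, ?_⟩
    · exact div_pos (sinh_pos_iff.2 (mul_pos hw hx.1)) hw
    · rw [cosh_lt_cosh, abs_mul, abs_mul]
      gcongr ?_ * _
      · exact sq_lt_sq.1 (by linarith)
  · refine ⟨_, _, isSinCosPair_id, fun x hx => hx.1, one_lt_cosh.2 ?_⟩
    have hd0 : d ≠ 0 := by rintro rfl; simp at hd
    exact mul_ne_zero hd0 hT.ne'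
  · obtain ⟨w, hw, rfl⟩ : ∃ w, 0 < w ∧ k = w ^ 2 :=
      ⟨√k, sqrt_pos.2 hpos, (sq_sqrt hpos.le).symm⟩
    have hwπ : w * T < π := (lt_div_iff₀ hT).1 (lt_of_pow_lt_pow_left₀ 2 (by positivity) hk)
    refine ⟨_, _, isSinCosPair_sin hw.ne', fun x hx => ?_, ?_⟩
    · exact div_pos (sin_pos_of_pos_of_lt_pi (mul_pos hw hx.1)
        ((mul_le_mul_of_nonneg_left hx.2 hw.le).trans_lt hwπ)) hw
    · calc cos (w * T) < cos 0 := cos_lt_cos_of_nonneg_of_le_pi le_rfl hwπ.le (mul_pos hw hT)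
        _ = 1 := cos_zero
        _ ≤ cosh (d * T) := one_le_cosh _

theorem IsSinCosPair.isLinODESol {k : ℝ} {S C : ℝ → ℝ} (h : IsSinCosPair k S C) :
    IsLinODESol 0 k 0 S C := fun t =>
  ⟨h.hasDerivAt_sin t, by simpa using h.hasDerivAt_cos t⟩

theorem IsSinCosPair.mul_add_comp_sub_pos {T k c r : ℝ} {S C : ℝ → ℝ} (h : IsSinCosPair k S C)
    (hT : 0 < T) (hS : ∀ x ∈ Ioc 0 T, 0 < S x) (hc : 0 < c) (hr : r ∈ Icc 0 T) :
    0 < c * S r + S (T - r) := by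
  rcases hr.1.eq_or_lt with rfl | h0
  · simpa [h.sin_zero] using hS T ⟨hT, le_rfl⟩
  · have hleft : 0 < c * S r := mul_pos hc (hS r ⟨h0, hr.2⟩)
    rcases hr.2.eq_or_lt with rfl | hrT
    · simpa [h.sin_zero] using hleft
    · exact add_pos hleft (hS (T - r) ⟨sub_pos.2 hrT, sub_le_self T hr.1⟩)

/-- The homogeneous solution `φ`, with derivative `φ'`, generates the Green's function of the
periodic problem on `[0, T]`: its `T`-periodic extension from `[0, T)` is continuous, and the
derivative of the extension has the jump `1` of an impulse response at the multiples of `T`. -/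
structure IsPeriodicKernel (T a b : ℝ) (φ φ' : ℝ → ℝ) : Prop where
  isLinODESol : IsLinODESol a b 0 φ φ'
  apply_period : φ T = φ 0
  deriv_period : φ' T = φ' 0 - 1

/-- The formula for `φ` is the sum over `n : ℕ` of the damped impulse responses
`exp (-d (r + n T)) S (r + n T)`, in closed form, whenever that series converges. -/
theorem IsSinCosPair.exists_isPeriodicKernel_pos {T k d : ℝ} {S C : ℝ → ℝ}
    (h : IsSinCosPair k S C) (hT : 0 < T) (hS : ∀ x ∈ Ioc 0 T, 0 < S x)
    (hC : C T < cosh (d * T)) :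
    ∃ φ φ', IsPeriodicKernel T (2 * d) (k + d ^ 2) φ φ' ∧ ∀ r ∈ Icc 0 T, 0 < φ r := by
  set N := 2 * (cosh (d * T) - C T) with hN
  have hNpos : 0 < N := mul_pos two_pos (sub_pos.2 hC)
  have hexp : exp (-d * T) * exp (d * T) = 1 := by rw [← exp_add]; simp
  have hjump : N = exp (d * T) + exp (-d * T) - 2 * C T := by
    rw [hN, cosh_eq, neg_mul]; ring
  have hsol : IsLinODESol (2 * d) (k + d ^ 2) 0
      (fun r => N⁻¹ * (exp (-d * r) * (exp (d * T) * S r + S (T - r))))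
      (fun r => N⁻¹ * (exp (-d * r) *
        (exp (d * T) * C r - C (T - r) - d * (exp (d * T) * S r + S (T - r))))) := by
    have hreflect : IsLinODESol 0 k 0 (fun r => S (T - r)) (fun r => -C (T - r)) :=
      neg_zero (G := ℝ) ▸ h.isLinODESol.comp_const_sub T
    convert (((h.isLinODESol.const_smul (exp (d * T))).add hreflect).exp_mul d).const_smul N⁻¹
      using 1
    · ring
    · ring
    · ext; simp
    · rfl
    · rfl
  refine ⟨_, _, ⟨hsol, ?_, ?_⟩, fun r hr => ?_⟩
  · simp only [sub_self, sub_zero, mul_zero, exp_zero, h.sin_zero]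
    linear_combination N⁻¹ * S T * hexp
  · simp only [sub_self, sub_zero, mul_zero, exp_zero, h.sin_zero, h.cos_zero]
    have hN1 : N⁻¹ * N = 1 := inv_mul_cancel₀ hNpos.ne'
    linear_combination N⁻¹ * (C T - d * S T) * hexp - hN1 + N⁻¹ * hjump
  · have hsum := h.mul_add_comp_sub_pos hT hS (exp_pos (d * T)) hr
    positivity

namespace IsPeriodicKernel

variable {T a b : ℝ} {g φ φ' : ℝ → ℝ}

theorem isLinODESol_impulseResponse (hφ : IsPeriodicKernel T a b φ φ') :
    IsLinODESol a b 0 (fun t => φ t - φ (t + T)) (fun t => φ' t - φ' (t + T)) := by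
  simpa [sub_eq_add_neg, Pi.add_def, Pi.smul_def, Pi.zero_def] using
    hφ.isLinODESol.add ((hφ.isLinODESol.comp_add_const T).const_smul (-1))

theorem exists_isLinODESol (hφ : IsPeriodicKernel T a b φ φ') (hg : Continuous g) :
    ∃ y y', IsLinODESol a b g y y' := by
  have hu := hφ.isLinODESol_impulseResponse
  refine hu.exists_of_wronskian_ne_zero hu.derivative ?_ hg
  simp [hφ.apply_period, hφ.deriv_period]

/-- Adding a combination of `φ` and `φ'` to any solution removes its periodicity defects. -/
theorem exists_periodic_isLinODESol (hφ : IsPeriodicKernel T a b φ φ') (hg : Continuous g) :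
    ∃ y y', IsLinODESol a b g y y' ∧ y 0 = y T ∧ y' 0 = y' T := by
  obtain ⟨y, y', hy⟩ := hφ.exists_isLinODESol hg
  have hsol := hy.add ((hφ.isLinODESol.const_smul (y' T - y' 0 + a * (y T - y 0))).add
    (hφ.isLinODESol.derivative.const_smul (y T - y 0)))
  rw [smul_zero, smul_zero, add_zero, add_zero] at hsol
  refine ⟨_, _, hsol, ?_, ?_⟩ <;>
  · simp only [Pi.add_apply, Pi.smul_apply, smul_eq_mul, hφ.apply_period, hφ.deriv_period]
    ring

end IsPeriodicKernel

theorem pd1_congr {T : ℝ} {x y : ℝ → ℝ} (h : EqOn x y (Icc 0 T)) :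
    EqOn (pd1 T x) (pd1 T y) (Icc 0 T) := fun _ ht =>
  derivWithin_congr h (h ht)

theorem pd1_eqOn_of_hasDerivAt {T : ℝ} {x x' : ℝ → ℝ} (hT : 0 < T)
    (h : ∀ t, HasDerivAt x (x' t) t) : EqOn (pd1 T x) x' (Icc 0 T) := fun t ht =>
  (h t).hasDerivWithinAt.derivWithin (uniqueDiffOn_Icc hT t ht)

theorem IsLinODESol.isLinSol {T a m : ℝ} {g h y y' : ℝ → ℝ} (hT : 0 < T)
    (hy : IsLinODESol a (m ^ 2) g y y') (hg : Continuous g) (hgh : EqOn g h (Icc 0 T))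
    (h0 : y 0 = y T) (h1 : y' 0 = y' T) : IsLinSol T a m h y := by
  have hpd1 : EqOn (pd1 T y) y' (Icc 0 T) := pd1_eqOn_of_hasDerivAt hT fun t => (hy t).1
  have hpd2 : EqOn (pd2 T y) _ (Icc 0 T) :=
    (pd1_congr hpd1).trans (pd1_eqOn_of_hasDerivAt hT fun t => (hy t).2)
  refine ⟨(hy.contDiff_two hg).contDiffOn, fun t ht => ?_, h0, ?_⟩
  · rw [hpd1 ht, hpd2 ht, ← hgh ht]
    ring
  · rwa [hpd1 (left_mem_Icc.2 hT.le), hpd1 (right_mem_Icc.2 hT.le)]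

theorem isLinSol_const (T a m c : ℝ) : IsLinSol T a m (fun _ => m ^ 2 * c) (fun _ => c) := by
  have hpd1 : pd1 T (fun _ => c) = 0 := derivWithin_fun_const ..
  have hpd2 : pd2 T (fun _ => c) = 0 := by
    rw [pd2, hpd1]
    exact derivWithin_zero _
  exact ⟨contDiffOn_const, fun t _ => by simp [hpd1, hpd2], rfl, by simp [hpd1]⟩

namespace IsLinSol

variable {T a m : ℝ} {h x y : ℝ → ℝ}

theorem congr (hT : 0 ≤ T) (hx : IsLinSol T a m h x) (hyx : EqOn y x (Icc 0 T)) :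
    IsLinSol T a m h y := by
  obtain ⟨hdiff, heq, h0, h1⟩ := hx
  have hpd1 : EqOn (pd1 T y) (pd1 T x) (Icc 0 T) := pd1_congr hyx
  have hpd2 : EqOn (pd2 T y) (pd2 T x) (Icc 0 T) := pd1_congr hpd1
  refine ⟨hdiff.congr hyx, fun t ht => ?_, ?_, ?_⟩
  · rw [hpd1 ht, hpd2 ht, hyx ht, heq t ht]
  · rw [hyx (left_mem_Icc.2 hT), hyx (right_mem_Icc.2 hT), h0]
  · rw [hpd1 (left_mem_Icc.2 hT), hpd1 (right_mem_Icc.2 hT), h1]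

theorem hasDerivWithinAt (hx : IsLinSol T a m h x) {t : ℝ} (ht : t ∈ Icc 0 T) :
    HasDerivWithinAt x (pd1 T x t) (Icc 0 T) t :=
  (hx.1.differentiableOn (by norm_num) t ht).hasDerivWithinAt

theorem hasDerivWithinAt_pd1 (hT : 0 < T) (hx : IsLinSol T a m h x) {t : ℝ} (ht : t ∈ Icc 0 T) :
    HasDerivWithinAt (pd1 T x) (h t - a * pd1 T x t - m ^ 2 * x t) (Icc 0 T) t := by
  have hpd1 : ContDiffOn ℝ 1 (pd1 T x) (Icc 0 T) :=
    hx.1.derivWithin (uniqueDiffOn_Icc hT) (by norm_num)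
  have hpd2 : HasDerivWithinAt (pd1 T x) (pd2 T x t) (Icc 0 T) t :=
    (hpd1.differentiableOn (by norm_num) t ht).hasDerivWithinAt
  exact hpd2.congr_deriv (by linear_combination hx.2.1 t ht)

end IsLinSol

/-- The bilinear concomitant of Lagrange's identity for `y'' + a y' + b y`, evaluated at `s` for
the pair formed by `x`, with derivative `x'`, and the reflected function `s ↦ φ (c - s)`. -/
def concomitant (a : ℝ) (φ φ' x x' : ℝ → ℝ) (c s : ℝ) : ℝ :=
  φ (c - s) * x' s + (φ' (c - s) + a * φ (c - s)) * x s

theorem IsLinSol.integral_comp_sub_mul {T a m c p q : ℝ} {h x φ φ' : ℝ → ℝ} (hT : 0 < T)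
    (hx : IsLinSol T a m h x) (hh : ContinuousOn h (Icc 0 T))
    (hφ : IsLinODESol a (m ^ 2) 0 φ φ') (hp : 0 ≤ p) (hpq : p ≤ q) (hq : q ≤ T) :
    ∫ s in p..q, φ (c - s) * h s =
      concomitant a φ φ' x (pd1 T x) c q - concomitant a φ φ' x (pd1 T x) c p := by
  have hsub : Icc p q ⊆ Icc 0 T := Icc_subset_Icc hp hq
  have hderiv (s : ℝ) (hs : s ∈ Icc 0 T) :
      HasDerivWithinAt (concomitant a φ φ' x (pd1 T x) c) (φ (c - s) * h s) (Icc 0 T) s := by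
    have hφs := ((hφ (c - s)).1.comp_const_sub c s).hasDerivWithinAt (s := Icc 0 T)
    have hφ's := ((hφ (c - s)).2.comp_const_sub c s).hasDerivWithinAt (s := Icc 0 T)
    refine ((hφs.mul (hx.hasDerivWithinAt_pd1 hT hs)).add
      ((hφ's.add (hφs.const_mul a)).mul (hx.hasDerivWithinAt hs))).congr_deriv ?_
    simp only [Pi.zero_apply, Pi.add_apply]
    ring
  apply intervalIntegral.integral_eq_sub_of_hasDerivAt_of_le hpq
  · exact fun s hs => ((hderiv s (hsub hs)).continuousWithinAt).mono hsub
  · exact fun s hs => (hderiv s (hsub (Ioo_subset_Icc_self hs))).hasDerivAt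
      (Icc_mem_nhds (hp.trans_lt hs.1) (hs.2.trans_le hq))
  · have hcont : Continuous fun s => φ (c - s) := hφ.continuous.comp (by fun_prop)
    exact (hcont.continuousOn.mul (hh.mono hsub)).intervalIntegrable_of_Icc hpq

/-- The Green's function of a periodic problem on `[0, T]` with kernel `φ`: for `t, s` in `[0, T]`
this is `φ (t - s)` with `t - s` taken modulo `T`, and `φ 0` on the diagonal. -/
noncomputable def greenFunction (T : ℝ) (φ : ℝ → ℝ) (t s : ℝ) : ℝ :=
  if s ≤ t then φ (t - s) else φ (t + T - s)

theorem greenFunction_self (T : ℝ) (φ : ℝ → ℝ) (s : ℝ) : greenFunction T φ s s = φ 0 := by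
  simp [greenFunction]

theorem greenFunction_mem_image {T t s : ℝ} {φ : ℝ → ℝ} (ht : t ∈ Icc 0 T) (hs : s ∈ Icc 0 T) :
    greenFunction T φ t s ∈ φ '' Icc 0 T := by
  rcases le_or_gt s t with hst | hts
  · exact ⟨t - s, ⟨sub_nonneg.2 hst, by linarith [hs.1, ht.2]⟩, (if_pos hst).symm⟩
  · exact ⟨t + T - s, ⟨by linarith [hs.2, ht.1], by linarith⟩, (if_neg hts.not_ge).symm⟩

namespace IsPeriodicKernel

variable {T a b m : ℝ} {φ φ' : ℝ → ℝ}

theorem greenFunction_of_le (hφ : IsPeriodicKernel T a b φ φ') {t s : ℝ} (hts : t ≤ s) :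
    greenFunction T φ t s = φ (t + T - s) := by
  rcases hts.eq_or_lt with rfl | hlt
  · rw [greenFunction_self, add_sub_cancel_left, hφ.apply_period]
  · exact if_neg hlt.not_ge

theorem continuous_greenFunction (hφ : IsPeriodicKernel T a b φ φ') :
    Continuous fun p : ℝ × ℝ => greenFunction T φ p.1 p.2 := by
  have hcont := hφ.isLinODESol.continuous
  refine Continuous.if_le (by fun_prop) (by fun_prop) (by fun_prop) (by fun_prop) fun p hp => ?_
  rw [hp, sub_self, add_sub_cancel_left, hφ.apply_period]

/-- The endpoint terms of Lagrange's identity on `[0, t]` and `[t, T]` cancel by periodicity, and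
the jump of `φ'` leaves `x t`. -/
theorem eq_integral_greenFunction_mul (hφ : IsPeriodicKernel T a (m ^ 2) φ φ') (hT : 0 < T)
    {h x : ℝ → ℝ} (hh : ContinuousOn h (Icc 0 T)) (hx : IsLinSol T a m h x)
    {t : ℝ} (ht : t ∈ Icc 0 T) : x t = ∫ s in (0 : ℝ)..T, greenFunction T φ t s * h s := by
  have hint : IntervalIntegrable (fun s => greenFunction T φ t s * h s) MeasureTheory.volume 0 T :=
    ((hφ.continuous_greenFunction.comp (Continuous.prodMk_right t)).continuousOn.mul
      hh).intervalIntegrable_of_Icc hT.le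
  have htmem : t ∈ uIcc 0 T := by rwa [uIcc_of_le hT.le]
  have hpast :
      ∫ s in (0 : ℝ)..t, greenFunction T φ t s * h s = ∫ s in (0 : ℝ)..t, φ (t - s) * h s :=
    intervalIntegral.integral_congr fun s hs => by
      rw [uIcc_of_le ht.1] at hs
      simp only [greenFunction, if_pos hs.2]
  have hfuture : ∫ s in t..T, greenFunction T φ t s * h s = ∫ s in t..T, φ (t + T - s) * h s :=
    intervalIntegral.integral_congr fun s hs => by
      rw [uIcc_of_le ht.2] at hs
      simp only [hφ.greenFunction_of_le hs.1]
  rw [← intervalIntegral.integral_add_adjacent_intervals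
      (hint.mono_set (uIcc_subset_uIcc_left htmem)) (hint.mono_set (uIcc_subset_uIcc_right htmem)),
    hpast, hfuture, hx.integral_comp_sub_mul hT hh hφ.isLinODESol le_rfl ht.1 ht.2,
    hx.integral_comp_sub_mul hT hh hφ.isLinODESol ht.1 ht.2 le_rfl]
  obtain ⟨-, -, hx0, hx1⟩ := hx
  simp only [concomitant, sub_self, sub_zero, add_sub_cancel_left, add_sub_cancel_right,
    hφ.apply_period, hφ.deriv_period, hx0, hx1]
  ring

theorem propG1_greenFunction (hφ : IsPeriodicKernel T a (m ^ 2) φ φ') (hT : 0 < T) :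
    PropG1 T a m (greenFunction T φ) := by
  intro h hh
  have hg : Continuous (IccExtend hT.le ((Icc 0 T).domRestrict h)) := hh.domRestrict.Icc_extend'
  have hgh : EqOn (IccExtend hT.le ((Icc 0 T).domRestrict h)) h (Icc 0 T) := fun t ht =>
    IccExtend_of_mem hT.le _ ht
  obtain ⟨y, y', hy, h0, h1⟩ := hφ.exists_periodic_isLinODESol hg
  have hsol : IsLinSol T a m h y := hy.isLinSol hT hg hgh h0 h1
  exact ⟨hsol.congr hT.le fun t ht => (hφ.eq_integral_greenFunction_mul hT hh hsol ht).symm,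
    fun x hx t ht => hφ.eq_integral_greenFunction_mul hT hh hx ht⟩

theorem apply_zero_le (hφ : IsPeriodicKernel T a b φ φ') (hb : 0 < b)
    (hpos : ∀ r ∈ Icc 0 T, 0 < φ r) {r : ℝ} (hr : r ∈ Icc 0 T) : φ 0 ≤ φ r := by
  have hmin := hφ.isLinODESol.min_le_of_lt_mul
    (fun t ht => mul_pos hb (hpos t (Ioo_subset_Icc_self ht))) hr
  rwa [hφ.apply_period, min_self] at hmin

end IsPeriodicKernel

theorem exists_mul_le_of_isCompact {X : Type*} [TopologicalSpace X] {K : Set X} {f : X → ℝ} {β : ℝ}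
    (hK : IsCompact K) (hf : ContinuousOn f K) (hβ : 0 < β) :
    ∃ c ∈ Ioo (0 : ℝ) 1, ∀ x ∈ K, c * f x ≤ β := by
  obtain ⟨M, hM⟩ := hK.exists_bound_of_continuousOn hf
  refine ⟨β / (β + |M| + 1), ⟨by positivity, ?_⟩, fun x hx => ?_⟩
  · rw [div_lt_one (by positivity)]
    linarith [abs_nonneg M]
  · have hfx : f x ≤ β + |M| + 1 := by
      linarith [le_abs_self (f x), (hM x hx).trans (le_abs_self M), norm_eq_abs (f x)]
    rw [div_mul_eq_mul_div, div_le_iff₀ (by positivity)]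
    exact mul_le_mul_of_nonneg_left hfx hβ.le

theorem exists_isPeriodicKernel_pos {T a b : ℝ} (hT : 0 < T) (hb : 0 < b)
    (hbT : b < (π / T) ^ 2 + (a / 2) ^ 2) :
    ∃ φ φ', IsPeriodicKernel T a b φ φ' ∧ ∀ r ∈ Icc 0 T, 0 < φ r := by
  obtain ⟨S, C, hSC, hS, hC⟩ := exists_isSinCosPair_pos_lt_cosh (k := b - (a / 2) ^ 2) (d := a / 2)
    hT (by linarith) (by linarith)
  simpa [mul_div_cancel₀] using hSC.exists_isPeriodicKernel_pos hT hS hC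

theorem statement0_general (T a m : ℝ) (hT : 0 < T) (hm : 0 < m)
    (hm' : m < √((π / T) ^ 2 + (a / 2) ^ 2)) :
    ∃ G : ℝ → ℝ → ℝ,
      ContinuousOn (fun p : ℝ × ℝ => G p.1 p.2) (Icc 0 T ×ˢ Icc 0 T) ∧
      PropG1 T a m G ∧
      (∀ t ∈ Icc 0 T, ∀ s ∈ Icc 0 T, 0 < G t s) ∧
      (∀ t ∈ Icc 0 T, (∫ s in (0 : ℝ)..T, G t s) = 1 / m ^ 2) ∧
      ∃ c : ℝ, c ∈ Ioo (0 : ℝ) 1 ∧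
        ∀ t ∈ Icc 0 T, ∀ s ∈ Icc 0 T, G s s ≤ G t s ∧ c * G t s ≤ G s s := by
  obtain ⟨φ, φ', hφ, hpos⟩ :=
    exists_isPeriodicKernel_pos hT (sq_pos_of_pos hm) ((lt_sqrt hm.le).1 hm')
  have hG1 : PropG1 T a m (greenFunction T φ) := hφ.propG1_greenFunction hT
  obtain ⟨c, hc, hcφ⟩ := exists_mul_le_of_isCompact isCompact_Icc
    hφ.isLinODESol.continuous.continuousOn (hpos 0 (left_mem_Icc.2 hT.le))
  refine ⟨greenFunction T φ, hφ.continuous_greenFunction.continuousOn, hG1, fun t ht s hs => ?_,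
    fun t ht => ?_, c, hc, fun t ht s hs => ?_⟩
  · obtain ⟨r, hr, hGr⟩ := greenFunction_mem_image (φ := φ) ht hs
    exact hGr ▸ hpos r hr
  · have hconst := (hG1 _ continuousOn_const).2 _ (isLinSol_const T a m (1 / m ^ 2)) t ht
    simpa only [mul_one_div_cancel (pow_ne_zero 2 hm.ne'), mul_one] using hconst.symm
  · obtain ⟨r, hr, hGr⟩ := greenFunction_mem_image (φ := φ) ht hs
    rw [greenFunction_self, ← hGr]
    exact ⟨hφ.apply_zero_le (sq_pos_of_pos hm) hpos hr, hcφ r hr⟩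

theorem statement0 (T a m : ℝ) (hT : 0 < T) (ha : 0 ≤ a) (hm : 0 < m)
    (hm' : m < Real.sqrt ((Real.pi / T) ^ 2 + (a / 2) ^ 2)) :
    ∃ G : ℝ → ℝ → ℝ,
      ContinuousOn (fun p : ℝ × ℝ => G p.1 p.2) (Set.Icc 0 T ×ˢ Set.Icc 0 T) ∧
      PropG1 T a m G ∧
      (∀ t ∈ Set.Icc 0 T, ∀ s ∈ Set.Icc 0 T, 0 < G t s) ∧
      (∀ t ∈ Set.Icc 0 T, (∫ s in (0:ℝ)..T, G t s) = 1 / m ^ 2) ∧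
      ∃ c : ℝ, c ∈ Set.Ioo (0:ℝ) 1 ∧
        ∀ t ∈ Set.Icc 0 T, ∀ s ∈ Set.Icc 0 T,
          G s s ≤ G t s ∧ c * G t s ≤ G s s :=
  statement0_general T a m hT hm hm'
end

section
/- Assume (H0): T>0, a≥0, r,s:[0,T]→ℝ continuous and 0<α<β<1; and (H1): there are m>0, R₂>0 and R₁∈(0,R₂) such that m²<(π/T)²+(a/2)² and f_m(t,x)≥0 for all t∈[0,T] and x∈[c_m R₁,R₂], where f_m(t,x)=r(t)x^α−s(t)x^β+m²x. Let G_m:[0,T]×[0,T]→ℝ be continuous with G_m>0 on [0,T]² and G_m(t,s) ≥ G_m(s,s) ≥ c_m G_m(t,s) for all (t,s), where c_m∈(0,1). Let f̃:[0,T]×[0,R₂]→ℝ be continuous, nonnegative, and equal to f_m on [0,T]×[c_m R₁,R₂], and define F̃x(t)=∫₀ᵀ G_m(t,s) f̃(s,x(s)) ds. Assume (H2): there is a continuous g₁:[0,T]→ℝ with f_m(t,x) ≤ g₁(t) for all t∈[0,T] and x∈[c_m R₂,R₂]; set δ(t)=∫₀ᵀ G_m(t,s) g₁(s) ds and assume either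 (H3) min_{t∈[0,T]} δ(t) ≤ c_m R₂ or (H4) max_{t∈[0,T]} δ(t) ≤ R₂. Then there do not exist λ>1 and x in the cone P = {x∈C([0,T],ℝ) : x(t) ≥ c_m‖x‖ for all t∈[0,T]} with ‖x‖=R₂ such that F̃x = λx. -/
open Set Real

/-!
An eigenfunction `x` of the Hammerstein operator with eigenvalue `lam > 1`, lying in the cone and of
norm `R`, takes its values in `[c R, R]`, where the nonlinearity is at most `g`. As the kernel is
nonnegative, `lam * x ≤ δ` pointwise, with `δ` the kernel integral of `g`. Minimizing over `t` gives
`c R < lam * c R ≤ min δ`, and maximizing gives `R < lam * R ≤ max δ`, so neither `min δ ≤ c R` nor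
`max δ ≤ R` is possible.
-/

section NormCone

/-- The cone of continuous functions on a compact space whose values are all at least `c` times the
maximum norm; the cone `P` of the paper is `normCone (Icc 0 T) c_m`. It is encoded as a plain set,
since only membership in it matters. -/
def normCone (X : Type*) [TopologicalSpace X] [CompactSpace X] (c : ℝ) : Set C(X, ℝ) :=
  {x | ∀ t, c * ‖x‖ ≤ x t}

variable {X : Type*} [TopologicalSpace X] [CompactSpace X] {c lam : ℝ} {x : C(X, ℝ)} {δ : X → ℝ}

theorem nonneg_of_mem_normCone (hc : 0 ≤ c) (hx : x ∈ normCone X c) : 0 ≤ x :=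
  fun t => (mul_nonneg hc (norm_nonneg x)).trans (hx t)

theorem apply_mem_Icc_of_mem_normCone (hx : x ∈ normCone X c) (t : X) :
    x t ∈ Icc (c * ‖x‖) ‖x‖ :=
  ⟨hx t, x.apply_le_norm t⟩

theorem mul_norm_lt_iInf_of_mem_normCone [Nonempty X] (hc : 0 < c) (hx : x ∈ normCone X c)
    (hx₀ : x ≠ 0) (hlam : 1 < lam) (hδ : ∀ t, lam * x t ≤ δ t) : c * ‖x‖ < ⨅ t, δ t :=
  calc c * ‖x‖
    _ < lam * (c * ‖x‖) := lt_mul_of_one_lt_left (mul_pos hc (norm_pos_iff.2 hx₀)) hlam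
    _ ≤ ⨅ t, δ t := le_ciInf fun t =>
      (mul_le_mul_of_nonneg_left (hx t) (zero_le_one.trans hlam.le)).trans (hδ t)

theorem norm_lt_iSup_of_mul_le [Nonempty X] (hx : 0 ≤ x) (hx₀ : x ≠ 0) (hlam : 1 < lam)
    (hbdd : BddAbove (range δ)) (hδ : ∀ t, lam * x t ≤ δ t) : ‖x‖ < ⨆ t, δ t := by
  have hlam₀ : 0 ≤ lam := zero_le_one.trans hlam.le
  calc ‖x‖
    _ < lam * ‖x‖ := lt_mul_of_one_lt_left (norm_pos_iff.2 hx₀) hlam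
    _ = ‖lam • x‖ := by rw [norm_smul, Real.norm_of_nonneg hlam₀]
    _ ≤ ⨆ t, δ t := (ContinuousMap.norm_le_of_nonempty _).2 fun t => by
      have hxt : 0 ≤ x t := hx t
      rw [ContinuousMap.smul_apply, smul_eq_mul, Real.norm_of_nonneg (mul_nonneg hlam₀ hxt)]
      exact (hδ t).trans (le_ciSup hbdd t)

end NormCone

section KernelIntegral

open MeasureTheory

/-- The integral operator `g ↦ ∫ u in a..b, G (·) u * g u ∂μ` with kernel `G`. With Lebesgue measure
on `[0, T]` it gives both `δ`, from `g₁`, and `F̃x`, from `u ↦ f̃ u (x u)`. -/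
noncomputable def kernelIntegral (μ : Measure ℝ) (a b : ℝ) (G : ℝ → ℝ → ℝ) (g : ℝ → ℝ) (t : ℝ) :
    ℝ :=
  ∫ u in a..b, G t u * g u ∂μ

variable {μ : Measure ℝ} {a b t : ℝ} {G : ℝ → ℝ → ℝ} {g h : ℝ → ℝ}

theorem kernelIntegral_mono (hab : a ≤ b) (hGc : ContinuousOn (G t) (Icc a b))
    (hG : ∀ u ∈ Icc a b, 0 ≤ G t u) (hg : IntervalIntegrable g μ a b)
    (hh : IntervalIntegrable h μ a b) (hgh : ∀ u ∈ Icc a b, g u ≤ h u) :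
    kernelIntegral μ a b G g t ≤ kernelIntegral μ a b G h t := by
  rw [← uIcc_of_le hab] at hGc
  exact intervalIntegral.integral_mono_on hab (hg.continuousOn_mul hGc) (hh.continuousOn_mul hGc)
    fun u hu => mul_le_mul_of_nonneg_left (hgh u hu) (hG u hu)

theorem bddAbove_kernelIntegral_image {K : Set ℝ} (hab : a ≤ b) (hK : IsCompact K)
    (hG : ContinuousOn G.uncurry (K ×ˢ Icc a b)) (hg : IntervalIntegrable g μ a b) :
    BddAbove (kernelIntegral μ a b G g '' K) := by
  obtain ⟨M, hM⟩ := (hK.prod isCompact_Icc).exists_bound_of_continuousOn hG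
  refine ⟨∫ u in a..b, M * ‖g u‖ ∂μ, ?_⟩
  rintro _ ⟨t, ht, rfl⟩
  have hbound : ∀ u ∈ Ioc a b, ‖G t u * g u‖ ≤ M * ‖g u‖ := fun u hu => by
    rw [norm_mul]
    exact mul_le_mul_of_nonneg_right (hM (t, u) ⟨ht, Ioc_subset_Icc_self hu⟩) (norm_nonneg _)
  exact (Real.le_norm_self _).trans <|
    intervalIntegral.norm_integral_le_of_norm_le hab (.of_forall hbound) (hg.norm.const_mul M)

end KernelIntegral

section Hammerstein

open MeasureTheory

variable {μ : Measure ℝ} [IsLocallyFiniteMeasure μ] {a b c R : ℝ} {G f : ℝ → ℝ → ℝ} {g : ℝ → ℝ}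

theorem kernelIntegral_comp_le (hab : a ≤ b) {x : C(Icc a b, ℝ)} {S : Set ℝ} {t : ℝ}
    (hxS : ∀ u, x u ∈ S) (hGc : ContinuousOn (G t) (Icc a b)) (hG : ∀ u ∈ Icc a b, 0 ≤ G t u)
    (hf : ContinuousOn f.uncurry (Icc a b ×ˢ S)) (hg : IntervalIntegrable g μ a b)
    (hfg : ∀ u ∈ Icc a b, ∀ y ∈ S, f u y ≤ g u) :
    kernelIntegral μ a b G (fun u => f u (IccExtend hab x u)) t ≤ kernelIntegral μ a b G g t := by
  have hcomp : ContinuousOn (fun u => f u (IccExtend hab x u)) (Icc a b) :=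
    hf.comp (continuous_id.prodMk x.continuous.Icc_extend').continuousOn fun u hu => ⟨hu, hxS _⟩
  exact kernelIntegral_mono hab hGc hG (hcomp.intervalIntegrable_of_Icc hab) hg
    fun u hu => hfg u hu _ (hxS _)

theorem statement6_general (hab : a ≤ b) (hc : 0 < c) (hR : 0 < R)
    (hGc : ContinuousOn G.uncurry (Icc a b ×ˢ Icc a b))
    (hG : ∀ t ∈ Icc a b, ∀ u ∈ Icc a b, 0 ≤ G t u)
    (hf : ContinuousOn f.uncurry (Icc a b ×ˢ Icc (c * R) R))
    (hg : IntervalIntegrable g μ a b)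
    (hfg : ∀ u ∈ Icc a b, ∀ y ∈ Icc (c * R) R, f u y ≤ g u)
    (hδ : sInf (kernelIntegral μ a b G g '' Icc a b) ≤ c * R ∨
      sSup (kernelIntegral μ a b G g '' Icc a b) ≤ R) :
    ¬ ∃ (lam : ℝ) (x : C(Icc a b, ℝ)), 1 < lam ∧ x ∈ normCone (Icc a b) c ∧ ‖x‖ = R ∧
      ∀ t : Icc a b,
        kernelIntegral μ a b G (fun u => f u (IccExtend hab x u)) t = lam * x t := by
  rintro ⟨lam, x, hlam, hx, rfl, heigen⟩
  have : Nonempty (Icc a b) := ⟨⟨a, left_mem_Icc.2 hab⟩⟩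
  have hx₀ : x ≠ 0 := norm_pos_iff.1 hR
  have hle (t : Icc a b) : lam * x t ≤ kernelIntegral μ a b G g t :=
    heigen t ▸ kernelIntegral_comp_le hab (apply_mem_Icc_of_mem_normCone hx)
      (ContinuousOn.uncurry_left (f := G) t t.2 hGc) (hG t t.2) hf hg hfg
  rcases hδ with hinf | hsup
  · rw [sInf_image'] at hinf
    exact (mul_norm_lt_iInf_of_mem_normCone hc hx hx₀ hlam hle).not_ge hinf
  · have hbdd := bddAbove_kernelIntegral_image hab isCompact_Icc hGc hg
    rw [image_eq_range] at hbdd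
    rw [sSup_image'] at hsup
    exact (norm_lt_iSup_of_mul_le (nonneg_of_mem_normCone hc.le hx) hx₀ hlam hbdd hle).not_ge hsup

end Hammerstein

theorem statement6 (T a m α β cm R₁ R₂ : ℝ) (r s g₁ : ℝ → ℝ)
    (hT : 0 < T) (ha : 0 ≤ a)
    (hr : ContinuousOn r (Set.Icc 0 T)) (hs : ContinuousOn s (Set.Icc 0 T))
    (hα : 0 < α) (hαβ : α < β) (hβ : β < 1)
    (hm : 0 < m) (hR₁ : 0 < R₁) (hR₁₂ : R₁ < R₂)
    (hm' : m ^ 2 < (Real.pi / T) ^ 2 + (a / 2) ^ 2)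
    (hcm : cm ∈ Set.Ioo (0:ℝ) 1)
    (hH1 : ∀ t ∈ Set.Icc 0 T, ∀ x ∈ Set.Icc (cm * R₁) R₂,
      0 ≤ r t * x ^ α - s t * x ^ β + m ^ 2 * x)
    (G : ℝ → ℝ → ℝ)
    (hGc : ContinuousOn (fun p : ℝ × ℝ => G p.1 p.2) (Set.Icc 0 T ×ˢ Set.Icc 0 T))
    (hGpos : ∀ t ∈ Set.Icc 0 T, ∀ u ∈ Set.Icc 0 T, 0 < G t u)
    (hG4 : ∀ t ∈ Set.Icc 0 T, ∀ u ∈ Set.Icc 0 T, G u u ≤ G t u ∧ cm * G t u ≤ G u u)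
    (ftil : ℝ → ℝ → ℝ)
    (hftc : ContinuousOn (fun p : ℝ × ℝ => ftil p.1 p.2) (Set.Icc 0 T ×ˢ Set.Icc 0 R₂))
    (hftnn : ∀ t ∈ Set.Icc 0 T, ∀ x ∈ Set.Icc (0:ℝ) R₂, 0 ≤ ftil t x)
    (hfteq : ∀ t ∈ Set.Icc 0 T, ∀ x ∈ Set.Icc (cm * R₁) R₂,
      ftil t x = r t * x ^ α - s t * x ^ β + m ^ 2 * x)
    (hg₁c : ContinuousOn g₁ (Set.Icc 0 T))
    (hH2 : ∀ t ∈ Set.Icc 0 T, ∀ x ∈ Set.Icc (cm * R₂) R₂,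
      r t * x ^ α - s t * x ^ β + m ^ 2 * x ≤ g₁ t)
    (hH34 :
      sInf ((fun t => ∫ u in (0:ℝ)..T, G t u * g₁ u) '' Set.Icc 0 T) ≤ cm * R₂ ∨
      sSup ((fun t => ∫ u in (0:ℝ)..T, G t u * g₁ u) '' Set.Icc 0 T) ≤ R₂) :
    ¬ ∃ (lam : ℝ) (x : C(Set.Icc (0:ℝ) T, ℝ)),
        1 < lam ∧ (∀ t : Set.Icc (0:ℝ) T, cm * ‖x‖ ≤ x t) ∧ ‖x‖ = R₂ ∧
        ∀ t : Set.Icc (0:ℝ) T,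
          (∫ u in (0:ℝ)..T, G (t : ℝ) u * ftil u (Set.IccExtend hT.le x u)) =
            lam * x t := by
  have hR₂ : 0 < R₂ := hR₁.trans hR₁₂
  have hsub₀ : Icc (cm * R₂) R₂ ⊆ Icc 0 R₂ := Icc_subset_Icc_left (mul_pos hcm.1 hR₂).le
  have hsub₁ : Icc (cm * R₂) R₂ ⊆ Icc (cm * R₁) R₂ :=
    Icc_subset_Icc_left (mul_le_mul_of_nonneg_left hR₁₂.le hcm.1.le)
  exact statement6_general hT.le hcm.1 hR₂ hGc (fun t ht u hu => (hGpos t ht u hu).le)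
    (hftc.mono (prod_mono_right hsub₀)) (hg₁c.intervalIntegrable_of_Icc hT.le)
    (fun t ht x hx => (hfteq t ht x (hsub₁ hx)).trans_le (hH2 t ht x hx)) hH34
end

section
/- Assume (H0): T>0, a≥0, r,s:[0,T]→ℝ continuous and 0<α<β<1; and (H1): there are m>0, R₂>0 and R₁∈(0,R₂) such that m²<(π/T)²+(a/2)² and f_m(t,x)≥0 for all t∈[0,T] and x∈[c_m R₁,R₂], where f_m(t,x)=r(t)x^α−s(t)x^β+m²x. Let G_m:[0,T]×[0,T]→ℝ be continuous such that: for each continuous h:[0,T]→ℝ, t ↦ ∫₀ᵀ G_m(t,s)h(s) ds is the unique solution of x''+a x'+m² x=h, x(0)=x(T), x'(0)=x'(T); G_m>0 on [0,T]²; and G_m(t,s) ≥ G_m(s,s) ≥ c_m G_m(t,s) for all (t,s), where c_m∈(0,1). Assume (H2): there is a continuous g₁ with f_m(t,x) ≤ g₁(t) for t∈[0,T], x∈[c_m R₂,R₂], and, with δ(t)=∫₀ᵀ G_m(t,s) g₁(s) ds, either (H3) min δ ≤ c_m R₂ or (H4) max δ ≤ R₂. Assume (H5): there is a continuous g₀ with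 f_m(t,x) ≥ g₀(t) ≥ 0 for t∈[0,T], x∈[c_m R₁,R₁], and, with γ(t)=∫₀ᵀ G_m(t,s) g₀(s) ds, either (H6) min γ ≥ c_m R₁ or (H7) max γ ≥ R₁. Then there exists a twice continuously differentiable x:[0,T]→ℝ with x''(t)+a x'(t) = r(t)x(t)^α − s(t)x(t)^β for all t∈[0,T], x(0)=x(T), x'(0)=x'(T), and c_m R₁ ≤ x(t) ≤ R₂ for all t∈[0,T]. -/
open Set Real

/-! Adding `m² x` to both sides turns the periodic problem into the Hammerstein equation
`x(t) = ∫ G(t, u) f_m(u, x(u)) du`. Clipping the second argument of `f_m` to `[c_m R₁, R₂]` makes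
the right-hand side a bounded compact operator on the continuous functions, so Schauder's theorem
gives a solution `z` of the clipped equation.

The kernel satisfies the Harnack inequality `c_m G(t, u) ≤ G(t', u)`, which passes to `γ`, `δ` and
`z`. For `γ` and `δ` it turns each of the alternatives on a minimum or a maximum into the pointwise
bounds `c_m R₁ ≤ γ` and `δ ≤ R₂`. For `z` it says that a value below `c_m R₁` forces `z ≤ R₁`
everywhere, where `f_m ≥ g₀` and so `z ≥ γ ≥ c_m R₁`; likewise a value above `R₂` forces
`z ≥ c_m R₂` everywhere, where `f_m ≤ g₁` and so `z ≤ δ ≤ R₂`. Hence the clipping was inactive.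

Schauder's theorem comes from Brouwer's by a partition of unity, and Brouwer's from the absence of
smooth retractions of the ball onto the sphere, by the volume argument of Milnor and Rogers.
-/

open MeasureTheory Metric Filter Polynomial
open scoped Topology RealInnerProductSpace

section LipschitzPerturbation

variable {E : Type*} [NormedAddCommGroup E]

lemma bijective_id_add_of_lipschitzWith [CompleteSpace E] {K : NNReal} {g : E → E}
    (hg : LipschitzWith K g) (hK : K < 1) : Function.Bijective fun x => x + g x := by
  refine Function.bijective_iff_existsUnique _ |>.mpr fun y => ?_
  have hcontr : ContractingWith K fun x => y - g x :=
    ⟨hK, by simpa using (LipschitzWith.const y).sub hg⟩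
  refine ⟨hcontr.fixedPoint, ?_, fun x hx => hcontr.fixedPoint_unique (sub_eq_of_eq_add hx.symm)⟩
  exact (eq_sub_iff_add_eq.mp hcontr.fixedPoint_isFixedPt.symm)

lemma inter_frontier_nonempty_of_isPreconnected {X : Type*} [TopologicalSpace X] {s t : Set X}
    (ht : IsPreconnected t) (hts : (t ∩ s).Nonempty) (hts' : (t ∩ sᶜ).Nonempty) :
    (t ∩ frontier s).Nonempty := by
  rw [frontier_eq_closure_inter_closure]
  refine isPreconnected_closed_iff.mp ht _ _ isClosed_closure isClosed_closure
    (fun x _ => ?_) (hts.mono ?_) (hts'.mono ?_)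
  · exact (em (x ∈ s)).imp (subset_closure ·) (subset_closure ·)
  all_goals exact inter_subset_inter_right t subset_closure

variable [NormedSpace ℝ E]

lemma lipschitzWith_indicator {F : Type*} [NormedAddCommGroup F] {C : Set E} {K : NNReal}
    {g : E → F} (hC : IsClosed C) (hg : LipschitzOnWith K g C)
    (hg0 : ∀ x ∈ frontier C, g x = 0) : LipschitzWith K (C.indicator g) := by
  have dist_zero_le : ∀ x ∈ C, ∀ y ∉ C, dist (g x) 0 ≤ K * dist x y := by
    intro x hx y hy
    obtain ⟨z, hz, hzC⟩ := inter_frontier_nonempty_of_isPreconnected (s := C)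
      (convex_segment x y).isPreconnected ⟨x, left_mem_segment ℝ x y, hx⟩
      ⟨y, right_mem_segment ℝ x y, hy⟩
    calc dist (g x) 0 = dist (g x) (g z) := by rw [hg0 z hzC]
      _ ≤ K * dist x z := hg.dist_le_mul x hx z (hC.frontier_subset hzC)
      _ ≤ K * dist x y := by
        gcongr
        linarith [dist_add_dist_of_mem_segment hz, dist_nonneg (x := z) (y := y)]
  refine LipschitzWith.of_dist_le_mul fun x y => ?_
  by_cases hx : x ∈ C <;> by_cases hy : y ∈ C <;> simp only [hx, hy, indicator_of_mem,
    indicator_of_notMem, not_false_eq_true]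
  · exact hg.dist_le_mul x hx y hy
  · exact dist_zero_le x hx y hy
  · rw [dist_comm, dist_comm x]
    exact dist_zero_le y hy x hx
  · simpa using by positivity

lemma bijOn_id_add_of_lipschitzOnWith [CompleteSpace E] {C : Set E} {K : NNReal} {g : E → E}
    (hC : IsClosed C) (hg : LipschitzOnWith K g C) (hK : K < 1)
    (hg0 : ∀ x ∈ frontier C, g x = 0) : BijOn (fun x => x + g x) C C := by
  have hbij := bijective_id_add_of_lipschitzWith (lipschitzWith_indicator hC hg hg0) hK
  have hCc : BijOn (fun x => x + C.indicator g x) Cᶜ Cᶜ :=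
    (bijOn_id Cᶜ).congr fun x hx => by simp [indicator_of_notMem hx]
  have hCC : BijOn (fun x => x + C.indicator g x) C C := by
    simpa only [compl_compl] using hCc.compl hbij
  exact hCC.congr fun x hx => by simp only [indicator_of_mem hx]

end LipschitzPerturbation

section Determinant

lemma det_one_add_pos {E : Type*} [NormedAddCommGroup E] [NormedSpace ℝ E]
    [FiniteDimensional ℝ E] {A : E →L[ℝ] E} (hA : ‖A‖ < 1) : 0 < (1 + A).det := by
  have := FiniteDimensional.complete ℝ E
  have det_ne_zero : ∀ B ∈ ball (0 : E →L[ℝ] E) 1, (1 + B).det ≠ 0 := by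
    intro B hB
    have hunit : IsUnit (1 + B) := by
      simpa using isUnit_one_sub_of_norm_lt_one (x := -B) (by simpa using hB)
    exact (LinearMap.isUnit_det _ (hunit.map ContinuousLinearMap.toLinearMapRingHom)).ne_zero
  by_contra! hneg
  obtain ⟨B, hB, hB0⟩ := (convex_ball (0 : E →L[ℝ] E) 1).isPreconnected.intermediate_value₂
    (f := fun B => (1 + B).det) (g := fun _ => 0) (a := A) (b := 0) (by simpa using hA) (by simp)
    (ContinuousLinearMap.continuous_det.comp (by fun_prop)).continuousOn continuousOn_const
    hneg (by simp [ContinuousLinearMap.det])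
  exact det_ne_zero B hB hB0

lemma exists_polynomial_eval_eq_det_one_add_smul {K V : Type*} [Field K] [AddCommGroup V]
    [Module K V] [FiniteDimensional K V] (A : V →ₗ[K] V) :
    ∃ p : K[X], p.natDegree ≤ Module.finrank K V ∧
      ∀ t : K, p.eval t = LinearMap.det (1 + t • A) := by
  let b := Module.finBasis K V
  let M := LinearMap.toMatrix b b A
  refine ⟨((X : K[X]) • M.map C + (1 : Matrix _ _ K).map C).det, ?_, fun t => ?_⟩
  · simpa using natDegree_det_X_add_C_le M 1
  · rw [← coe_evalRingHom, RingHom.map_det, ← LinearMap.det_toMatrix b]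
    congr 1
    rw [show LinearMap.toMatrix b b (1 + t • A) = 1 + t • M by simp [M], add_comm 1]
    ext i j
    by_cases hij : i = j <;> simp [hij, mul_comm t]

lemma exists_polynomial_eval_eq_integral {X : Type*} [MeasurableSpace X] {μ : Measure X} {n : ℕ}
    {p : X → ℝ[X]} (hp : ∀ x, (p x).natDegree ≤ n)
    (hint : ∀ t, Integrable (fun x => (p x).eval t) μ) :
    ∃ P : ℝ[X], ∀ t, P.eval t = ∫ x, (p x).eval t ∂μ := by
  let node : Fin (n + 1) → ℝ := fun i => i
  have hnode : InjOn node (Finset.univ : Finset (Fin (n + 1))) :=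
    fun i _ j _ hij => Fin.ext (by simpa [node] using hij)
  have eval_eq_sum : ∀ x t, (p x).eval t =
      ∑ i, (p x).eval (node i) * (Lagrange.basis Finset.univ node i).eval t := by
    intro x t
    have hdeg : (p x).degree < (Finset.univ : Finset (Fin (n + 1))).card := by
      rw [Finset.card_univ, Fintype.card_fin]
      exact degree_le_natDegree.trans_lt (by exact_mod_cast Nat.lt_succ_of_le (hp x))
    conv_lhs => rw [Lagrange.eq_interpolate hnode hdeg]
    simp [Lagrange.interpolate_apply, eval_finsetSum]
  refine ⟨Lagrange.interpolate Finset.univ node fun i => ∫ x, (p x).eval (node i) ∂μ, fun t => ?_⟩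
  simp_rw [eval_eq_sum _ t]
  rw [integral_finsetSum _ fun i _ => (hint (node i)).mul_const _]
  simp [Lagrange.interpolate_apply, eval_finsetSum, integral_mul_const]

end Determinant

section Volume

variable {E : Type*} [NormedAddCommGroup E] [NormedSpace ℝ E] [FiniteDimensional ℝ E]
  [MeasurableSpace E] [BorelSpace E] (μ : Measure E) [μ.IsAddHaarMeasure]
  {C : Set E} {g : E → E} {g' : E → E →L[ℝ] E}

lemma setIntegral_det_one_add_of_nnnorm_le {K : NNReal} (hC : IsClosed C) (hconv : Convex ℝ C)
    (hg : ∀ x ∈ C, HasFDerivWithinAt g (g' x) C x) (hbound : ∀ x ∈ C, ‖g' x‖₊ ≤ K) (hK : K < 1)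
    (hg0 : ∀ x ∈ frontier C, g x = 0) : ∫ x in C, (1 + g' x).det ∂μ = μ.real C := by
  have := FiniteDimensional.complete ℝ E
  have hbij : BijOn (fun x => x + g x) C C := bijOn_id_add_of_lipschitzOnWith hC
    (hconv.lipschitzOnWith_of_nnnorm_hasFDerivWithin_le hg hbound) hK hg0
  have hderiv : ∀ x ∈ C, HasFDerivWithinAt (fun x => x + g x) (1 + g' x) C x :=
    fun x hx => (hasFDerivWithinAt_id x C).add (hg x hx)
  have hchange := integral_image_eq_integral_abs_det_fderiv_smul μ hC.measurableSet hderiv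
    hbij.injOn fun _ => (1 : ℝ)
  rw [hbij.image_eq] at hchange
  simp only [integral_const, smul_eq_mul, mul_one, measureReal_restrict_apply_univ] at hchange
  rw [hchange]
  refine setIntegral_congr_fun hC.measurableSet fun x hx => (abs_of_pos ?_).symm
  exact det_one_add_pos ((hbound x hx).trans_lt hK)

/- Milnor–Rogers: the integral of `det (1 + t g')` is a polynomial in `t`, and it is constant for
small `t`, where `x + t g x` is a bijection of `C`. -/
lemma setIntegral_det_one_add (hC : IsCompact C) (hconv : Convex ℝ C)
    (hg : ∀ x ∈ C, HasFDerivWithinAt g (g' x) C x) (hg' : ContinuousOn g' C)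
    (hg0 : ∀ x ∈ frontier C, g x = 0) : ∫ x in C, (1 + g' x).det ∂μ = μ.real C := by
  choose p hdeg hp using fun x => exists_polynomial_eval_eq_det_one_add_smul (g' x : E →ₗ[ℝ] E)
  have hp' : ∀ x t, (p x).eval t = (1 + t • g' x).det := hp
  have hint : ∀ t, Integrable (fun x => (p x).eval t) (μ.restrict C) := by
    intro t
    simp only [hp']
    exact (ContinuousLinearMap.continuous_det.comp_continuousOn
      (continuousOn_const.add (hg'.const_smul t))).integrableOn_compact hC
  obtain ⟨P, hP⟩ := exists_polynomial_eval_eq_integral hdeg hint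
  obtain ⟨M, hM⟩ := hC.exists_bound_of_continuousOn hg'
  have hsmall : ∀ t ∈ Ioo 0 (1 / (|M| + 1)), P.eval t = μ.real C := by
    intro t ht
    have htM : t * |M| < 1 := by
      have := (lt_div_iff₀ (by positivity)).mp ht.2
      linarith [ht.1]
    simp only [hP, hp']
    refine setIntegral_det_one_add_of_nnnorm_le (g := t • g) (K := (t * |M|).toNNReal) μ
      hC.isClosed hconv (fun x hx => (hg x hx).const_smul t)
      (fun x hx => NNReal.le_toNNReal_of_coe_le ?_) (Real.toNNReal_lt_one.mpr htM)
      fun x hx => by simp [hg0 x hx]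
    rw [coe_nnnorm, norm_smul, norm_of_nonneg ht.1.le]
    exact mul_le_mul_of_nonneg_left ((hM x hx).trans (le_abs_self M)) ht.1.le
  have hpos : 0 < 1 / (|M| + 1) := by positivity
  have hconst : P = Polynomial.C (μ.real C) := Polynomial.eq_of_infinite_eval_eq _ _
    ((Ioo_infinite hpos).mono fun t ht => by simpa using hsmall t ht)
  simpa [hconst, hp'] using (hP 1).symm

end Volume

lemma not_retraction_closedBall_sphere {E : Type*} [NormedAddCommGroup E] [InnerProductSpace ℝ E]
    [FiniteDimensional ℝ E] {r : E → E} (hr : ContDiffOn ℝ 1 r (closedBall 0 1))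
    (hmaps : MapsTo r (closedBall 0 1) (sphere 0 1)) : ¬ EqOn r id (sphere 0 1) := by
  intro hid
  borelize E
  have hunique : UniqueDiffOn ℝ (closedBall (0 : E) 1) :=
    uniqueDiffOn_convex (convex_closedBall 0 1)
      ⟨0, ball_subset_interior_closedBall (mem_ball_self one_pos)⟩
  have hderiv : ∀ x ∈ closedBall (0 : E) 1,
      HasFDerivWithinAt r (fderivWithin ℝ r (closedBall 0 1) x) (closedBall 0 1) x :=
    fun x hx => (hr.differentiableOn one_ne_zero x hx).hasFDerivWithinAt
  have inner_deriv : ∀ x ∈ closedBall (0 : E) 1, ∀ v,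
      ⟪r x, fderivWithin ℝ r (closedBall 0 1) x v⟫ = 0 := by
    intro x hx v
    have hconst : HasFDerivWithinAt (fun y => ‖r y‖ ^ 2) (0 : E →L[ℝ] ℝ) (closedBall 0 1) x :=
      (hasFDerivWithinAt_const (1 : ℝ) x _).congr
        (fun y hy => by simp [mem_sphere_zero_iff_norm.mp (hmaps hy)])
        (by simp [mem_sphere_zero_iff_norm.mp (hmaps hx)])
    have := congrArg (· v) ((hunique x hx).eq (hderiv x hx).norm_sq hconst)
    simpa using this
  have det_zero : ∀ x ∈ closedBall (0 : E) 1,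
      (fderivWithin ℝ r (closedBall 0 1) x).det = 0 := by
    intro x hx
    by_contra hdet
    obtain ⟨v, hv⟩ := (LinearMap.equivOfDetNeZero _ hdet).surjective (r x)
    have hrx : ⟪r x, r x⟫ = 0 := by
      rw [← inner_deriv x hx v]
      exact congrArg _ hv.symm
    simp [mem_sphere_zero_iff_norm.mp (hmaps hx)] at hrx
  have hvol := setIntegral_det_one_add volume (g := fun x => r x - x)
    (g' := fun x => fderivWithin ℝ r (closedBall 0 1) x - 1)
    (isCompact_closedBall (0 : E) 1) (convex_closedBall 0 1)
    (fun x hx => (hderiv x hx).sub (hasFDerivWithinAt_id x _))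
    ((hr.continuousOn_fderivWithin hunique le_rfl).sub continuousOn_const)
    (fun x hx => sub_eq_zero.mpr (hid (frontier_closedBall_subset_sphere hx)))
  simp only [add_sub_cancel] at hvol
  rw [setIntegral_congr_fun measurableSet_closedBall det_zero, integral_zero] at hvol
  exact (ENNReal.toReal_pos (measure_closedBall_pos volume _ one_pos).ne'
    measure_closedBall_lt_top.ne).ne hvol

section Brouwer

variable {E : Type*} [NormedAddCommGroup E] [InnerProductSpace ℝ E]

/-- One quarter of the discriminant of the quadratic equation `‖x + l • u‖ ^ 2 = 1` in `l`. -/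
noncomputable def exitDiscrim (x u : E) : ℝ := ⟪x, u⟫ ^ 2 + ‖u‖ ^ 2 * (1 - ‖x‖ ^ 2)

/-- The time at which a point starting at `x` with velocity `u` leaves the closed unit ball: the
larger root `l` of `‖x + l • u‖ ^ 2 = 1`. -/
noncomputable def exitTime (x u : E) : ℝ := (-⟪x, u⟫ + √(exitDiscrim x u)) / ‖u‖ ^ 2

lemma norm_add_exitTime_smul {x u : E} (hu : u ≠ 0) (hdiscrim : 0 ≤ exitDiscrim x u) :
    ‖x + exitTime x u • u‖ = 1 := by
  have hu2 : ‖u‖ ^ 2 ≠ 0 := by simpa using hu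
  have hsqrt : √(exitDiscrim x u) = exitTime x u * ‖u‖ ^ 2 + ⟪x, u⟫ := by
    rw [exitTime, div_mul_cancel₀ _ hu2]
    ring
  have hsq := Real.sq_sqrt hdiscrim
  rw [hsqrt, exitDiscrim] at hsq
  refine (pow_eq_one_iff_of_nonneg (norm_nonneg _) two_ne_zero).mp (mul_left_cancel₀ hu2 ?_)
  rw [norm_add_sq_real, inner_smul_right, norm_smul, mul_pow, Real.norm_eq_abs, sq_abs]
  linarith

lemma exitTime_eq_zero {x u : E} (hx : ‖x‖ = 1) (hxu : 0 ≤ ⟪x, u⟫) : exitTime x u = 0 := by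
  simp [exitTime, exitDiscrim, hx, Real.sqrt_sq hxu]

lemma contDiffAt_exitTime_comp {F : Type*} [NormedAddCommGroup F] [NormedSpace ℝ F] {n : WithTop ℕ∞}
    {v w : F → E} {x : F} (hv : ContDiffAt ℝ n v x) (hw : ContDiffAt ℝ n w x) (hwx : w x ≠ 0)
    (hdiscrim : exitDiscrim (v x) (w x) ≠ 0) :
    ContDiffAt ℝ n (fun y => exitTime (v y) (w y)) x := by
  have hinner := hv.inner ℝ hw
  have hnorm := hw.norm_sq ℝ
  have hdisc : ContDiffAt ℝ n (fun y => exitDiscrim (v y) (w y)) x :=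
    (hinner.pow 2).add (hnorm.mul (contDiffAt_const.sub (hv.norm_sq ℝ)))
  exact (hinner.neg.add (hdisc.sqrt hdiscrim)).div hnorm (by simpa using hwx)

lemma norm_sub_sq_le_two_mul_inner_add (x : E) {y : E} (hy : ‖y‖ ≤ 1) :
    ‖x - y‖ ^ 2 ≤ 2 * ⟪x, x - y⟫ + (1 - ‖x‖ ^ 2) := by
  rw [norm_sub_sq_real, inner_sub_right, real_inner_self_eq_norm_sq]
  nlinarith [norm_nonneg y]

lemma inner_sub_pos_of_norm_eq_one {x y : E} (hx : ‖x‖ = 1) (hy : ‖y‖ ≤ 1) (hxy : x ≠ y) :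
    0 < ⟪x, x - y⟫ := by
  have hpos : 0 < ‖x - y‖ ^ 2 := pow_pos (norm_pos_iff.mpr (sub_ne_zero.mpr hxy)) 2
  have := norm_sub_sq_le_two_mul_inner_add x hy
  rw [hx] at this
  linarith

lemma exitDiscrim_sub_pos {x y : E} (hx : ‖x‖ ≤ 1) (hy : ‖y‖ ≤ 1) (hxy : x ≠ y) :
    0 < exitDiscrim x (x - y) := by
  have hpos : 0 < ‖x - y‖ ^ 2 := pow_pos (norm_pos_iff.mpr (sub_ne_zero.mpr hxy)) 2
  rw [exitDiscrim]
  rcases hx.lt_or_eq with hlt | heq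
  · have : 0 < 1 - ‖x‖ ^ 2 := by nlinarith [norm_nonneg x]
    positivity
  · have := inner_sub_pos_of_norm_eq_one heq hy hxy
    rw [heq]
    nlinarith

variable [FiniteDimensional ℝ E]

lemma exists_fixedPoint_of_contDiff_of_norm_le_one {q : E → E} (hq : ContDiff ℝ 1 q)
    (hq1 : ∀ x, ‖q x‖ ≤ 1) : ∃ x, q x = x := by
  by_contra! hne
  have hne' : ∀ x, x - q x ≠ 0 := fun x => sub_ne_zero.mpr (hne x).symm
  have hdiscrim : ∀ x ∈ closedBall (0 : E) 1, 0 < exitDiscrim x (x - q x) := fun x hx =>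
    exitDiscrim_sub_pos (mem_closedBall_zero_iff.mp hx) (hq1 x) (hne x).symm
  have hu : ContDiff ℝ 1 fun x => x - q x := contDiff_id.sub hq
  refine not_retraction_closedBall_sphere (r := fun x => x + exitTime x (x - q x) • (x - q x))
    (fun x hx => ?_) (fun x hx => ?_) (fun x hx => ?_)
  · exact (contDiffAt_id.add ((contDiffAt_exitTime_comp contDiffAt_id hu.contDiffAt (hne' x)
      (hdiscrim x hx).ne').smul hu.contDiffAt)).contDiffWithinAt
  · exact mem_sphere_zero_iff_norm.mpr (norm_add_exitTime_smul (hne' x) (hdiscrim x hx).le)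
  · have hx1 := mem_sphere_zero_iff_norm.mp hx
    simp [exitTime_eq_zero hx1 (inner_sub_pos_of_norm_eq_one hx1 (hq1 x) (hne x).symm).le]

lemma exists_fixedPoint_of_contDiff_of_norm_le {q : E → E} (hq : ContDiff ℝ 1 q) {R : ℝ}
    (hR : 0 < R) (hqR : ∀ x, ‖q x‖ ≤ R) : ∃ x, q x = x := by
  obtain ⟨x, hx⟩ := exists_fixedPoint_of_contDiff_of_norm_le_one (q := fun x => R⁻¹ • q (R • x))
    (by fun_prop) fun x => by
      rw [norm_smul, norm_inv, norm_of_nonneg hR.le, inv_mul_le_one₀ hR]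
      exact hqR _
  exact ⟨R • x, (inv_smul_eq_iff₀ hR.ne').mp hx⟩

lemma exists_fixedPoint_of_approx {X : Type*} [MetricSpace X] {C K : Set X}
    {f : X → X} (hK : IsCompact K) (hKC : K ⊆ C) (hf : ContinuousOn f C) (hmaps : MapsTo f C K)
    (happrox : ∀ ε > 0, ∃ x ∈ C, dist x (f x) ≤ ε) : ∃ x ∈ K, f x = x := by
  choose x hxC hx using fun n : ℕ => happrox (1 / ((n : ℝ) + 1)) (by positivity)
  obtain ⟨y, hyK, φ, hφ, hfx⟩ := hK.tendsto_subseq fun n => hmaps (hxC n)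
  have hdist : Tendsto (fun n => dist (x (φ n)) (f (x (φ n)))) atTop (𝓝 0) :=
    squeeze_zero (fun _ => dist_nonneg) (fun n => hx (φ n))
      (tendsto_one_div_add_atTop_nhds_zero_nat.comp hφ.tendsto_atTop)
  have hxy : Tendsto (fun n => x (φ n)) atTop (𝓝 y) :=
    (tendsto_iff_of_dist hdist).mpr hfx
  have hxy' : Tendsto (fun n => x (φ n)) atTop (𝓝[C] y) :=
    tendsto_nhdsWithin_iff.mpr ⟨hxy, Eventually.of_forall fun n => hxC (φ n)⟩
  exact ⟨y, hyK, tendsto_nhds_unique ((hf y (hKC hyK)).tendsto.comp hxy') hfx⟩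

lemma exists_fixedPoint_of_continuous_of_norm_le {f : E → E} (hf : Continuous f) {R : ℝ}
    (hfR : ∀ x, ‖f x‖ ≤ R) : ∃ x, f x = x := by
  have happrox : ∀ ε > 0, ∃ x ∈ univ, dist x (f x) ≤ ε := by
    intro ε hε
    obtain ⟨q, hq, hqf, -⟩ := hf.exists_contDiff_approx 1 (ε := fun _ => ε) continuous_const
      fun _ => hε
    have hqR : ∀ x, ‖q x‖ ≤ R + ε := fun x =>
      (norm_le_norm_add_norm_sub' (q x) (f x)).trans
        (add_le_add (hfR x) (dist_eq_norm (q x) (f x) ▸ (hqf x).le))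
    obtain ⟨x, hx⟩ := exists_fixedPoint_of_contDiff_of_norm_le hq
      (add_pos_of_nonneg_of_pos ((norm_nonneg _).trans (hfR 0)) hε) hqR
    have hxf := (hqf x).le
    rw [hx] at hxf
    exact ⟨x, mem_univ x, hxf⟩
  obtain ⟨x, -, hx⟩ := exists_fixedPoint_of_approx (isCompact_closedBall (0 : E) R)
    (subset_univ _) hf.continuousOn (fun x _ => mem_closedBall_zero_iff.mpr (hfR x)) happrox
  exact ⟨x, hx⟩

lemma exists_lipschitzWith_one_retraction {F : Type*} [NormedAddCommGroup F]
    [InnerProductSpace ℝ F] {C : Set F} (hC : IsComplete C) (hconv : Convex ℝ C)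
    (hne : C.Nonempty) :
    ∃ P : F → F, LipschitzWith 1 P ∧ (∀ x, P x ∈ C) ∧ ∀ x ∈ C, P x = x := by
  choose P hPC hP using exists_norm_eq_iInf_of_complete_convex hne hC hconv
  have inner_le : ∀ x, ∀ w ∈ C, ⟪x - P x, w - P x⟫ ≤ 0 := fun x =>
    (norm_eq_iInf_iff_real_inner_le_zero hconv (hPC x)).mp (hP x)
  refine ⟨P, LipschitzWith.of_dist_le_mul fun x y => ?_, hPC, fun x hx => ?_⟩
  · have hsq : ‖P x - P y‖ ^ 2 ≤ ‖x - y‖ * ‖P x - P y‖ := by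
      calc ‖P x - P y‖ ^ 2
          = ⟪x - y, P x - P y⟫ + ⟪x - P x, P y - P x⟫ + ⟪y - P y, P x - P y⟫ := by
            rw [← real_inner_self_eq_norm_sq, ← neg_sub (P x) (P y), inner_neg_right,
              ← sub_eq_add_neg, ← inner_sub_left, ← inner_add_left]
            congr 1
            abel
        _ ≤ ⟪x - y, P x - P y⟫ := by
            linarith [inner_le x _ (hPC y), inner_le y _ (hPC x)]
        _ ≤ ‖x - y‖ * ‖P x - P y‖ := real_inner_le_norm _ _
    rw [NNReal.coe_one, one_mul, dist_eq_norm, dist_eq_norm]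
    nlinarith [norm_nonneg (P x - P y), norm_nonneg (x - y)]
  · have := inner_le x x hx
    rw [real_inner_self_nonpos, sub_eq_zero] at this
    exact this.symm

lemma exists_fixedPoint_of_isCompact_convex_of_inner {C : Set E} (hC : IsCompact C)
    (hconv : Convex ℝ C) (hne : C.Nonempty) {f : E → E} (hf : ContinuousOn f C)
    (hmaps : MapsTo f C C) : ∃ x ∈ C, f x = x := by
  obtain ⟨P, hP, hPC, hPid⟩ := exists_lipschitzWith_one_retraction hC.isComplete hconv hne
  obtain ⟨R, hR⟩ := hC.exists_bound_of_continuousOn continuousOn_id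
  obtain ⟨x, hx⟩ := exists_fixedPoint_of_continuous_of_norm_le
    (hf.comp_continuous hP.continuous hPC) fun x => hR _ (hmaps (hPC x))
  have hxC : x ∈ C := hx ▸ hmaps (hPC x)
  exact ⟨x, hxC, by simpa only [Function.comp_apply, hPid x hxC] using hx⟩

theorem brouwer_fixedPoint {V : Type*} [NormedAddCommGroup V] [NormedSpace ℝ V]
    [FiniteDimensional ℝ V] {C : Set V} (hC : IsCompact C) (hconv : Convex ℝ C)
    (hne : C.Nonempty) {f : V → V} (hf : ContinuousOn f C) (hmaps : MapsTo f C C) :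
    ∃ x ∈ C, f x = x := by
  let e : V ≃L[ℝ] EuclideanSpace ℝ (Fin (Module.finrank ℝ V)) := toEuclidean
  have hsymm : MapsTo e.symm (e '' C) C := by
    rintro _ ⟨x, hx, rfl⟩
    simpa using hx
  obtain ⟨_, ⟨x, hx, rfl⟩, hfix⟩ := exists_fixedPoint_of_isCompact_convex_of_inner
    (hC.image e.continuous) (hconv.linear_image e.toLinearEquiv.toLinearMap) (hne.image e)
    (f := fun y => e (f (e.symm y)))
    (e.continuous.comp_continuousOn (hf.comp e.symm.continuous.continuousOn hsymm))
    fun y hy => mem_image_of_mem e (hmaps (hsymm hy))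
  exact ⟨x, hx, e.injective (by simpa using hfix)⟩

end Brouwer

section Schauder

variable {E : Type*} [NormedAddCommGroup E] [NormedSpace ℝ E] {C K : Set E} {f : E → E}

lemma exists_dist_self_apply_le (hconv : Convex ℝ C) (hne : C.Nonempty) (hK : IsCompact K)
    (hKC : K ⊆ C) (hf : ContinuousOn f C) (hmaps : MapsTo f C K) {ε : ℝ} (hε : 0 < ε) :
    ∃ x ∈ C, dist x (f x) ≤ ε := by
  obtain ⟨t, htK, htfin, hcover⟩ := hK.finite_cover_balls hε
  have := htfin.fintype
  obtain ⟨ρ, hρ⟩ := PartitionOfUnity.exists_isSubordinate hK.isClosed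
    (fun y : t => ball (y : E) ε) (fun _ => isOpen_ball) (by simpa [iUnion_subtype] using hcover)
  have weights_mem : ∀ z ∈ K, (fun i => ρ i z) ∈ stdSimplex ℝ t := fun z hz =>
    ⟨fun i => ρ.nonneg i z, by simpa [finsum_eq_sum_of_fintype] using ρ.sum_eq_one hz⟩
  have combination_mem : MapsTo (fun w : t → ℝ => ∑ i, w i • (i : E)) (stdSimplex ℝ t) C :=
    fun w hw => hconv.sum_mem (fun i _ => hw.1 i) hw.2 fun i _ => hKC (htK i.2)
  obtain ⟨x₀, hx₀⟩ := hne
  obtain ⟨w, hw, hfix⟩ := brouwer_fixedPoint (isCompact_stdSimplex ℝ t) (convex_stdSimplex ℝ t)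
    ⟨_, weights_mem _ (hmaps hx₀)⟩ (f := fun w i => ρ i (f (∑ j, w j • (j : E))))
    (continuousOn_pi.mpr fun i => (ρ i).continuous.comp_continuousOn
      (hf.comp (by fun_prop) combination_mem))
    fun w hw => weights_mem _ (hmaps (combination_mem hw))
  have hxC := combination_mem hw
  refine ⟨_, hxC, ?_⟩
  -- The partition of unity only weights the centres lying within `ε` of `f x`.
  have hball := ρ.finsum_smul_mem_convex (g := fun i _ => (i : E)) (hmaps hxC)
    (fun i hi => mem_closedBall'.mpr
      (mem_ball.mp (hρ i (subset_tsupport (ρ i) hi))).le) (convex_closedBall _ ε)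
  rw [finsum_eq_sum_of_fintype] at hball
  simpa only [congrFun hfix] using mem_closedBall.mp hball

theorem schauder_fixedPoint (hconv : Convex ℝ C) (hne : C.Nonempty) (hK : IsCompact K)
    (hKC : K ⊆ C) (hf : ContinuousOn f C) (hmaps : MapsTo f C K) : ∃ x ∈ K, f x = x :=
  exists_fixedPoint_of_approx hK hKC hf hmaps fun _ hε =>
    exists_dist_self_apply_le hconv hne hK hKC hf hmaps hε

lemma exists_fixedPoint_of_isCompactOperator {F : Type*} [NormedAddCommGroup F] [NormedSpace ℝ F]
    {L : E →L[ℝ] F} (hL : IsCompactOperator L) {N : F → E} (hN : Continuous N)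
    {M : ℝ} (hM : ∀ y, ‖N y‖ ≤ M) : ∃ y, L (N y) = y := by
  obtain ⟨y, -, hy⟩ := schauder_fixedPoint convex_univ univ_nonempty
    (hL.isCompact_closure_image_closedBall M) (subset_univ _)
    (L.continuous.comp hN).continuousOn fun y _ =>
      subset_closure (mem_image_of_mem L (mem_closedBall_zero_iff.mpr (hM y)))
  exact ⟨y, hy⟩

end Schauder

section CompactOperator

variable {X E F : Type*} [TopologicalSpace X] [CompactSpace X] [NormedAddCommGroup E]
  [NormedSpace ℝ E] [NormedAddCommGroup F] [NormedSpace ℝ F]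

/-- The operator `h ↦ (x ↦ κ x h)` defined by a continuous family `κ` of bounded operators; it is
the abstract form of an integral operator with continuous kernel. -/
noncomputable def familyOperator (κ : C(X, E →L[ℝ] F)) : E →L[ℝ] C(X, F) :=
  LinearMap.mkContinuous
    { toFun := fun h => ⟨fun x => κ x h, by fun_prop⟩
      map_add' := fun h h' => by ext x; simp
      map_smul' := fun c h => by ext x; simp }
    ‖κ‖ fun h => (ContinuousMap.norm_le _ (by positivity)).mpr fun x =>
      (κ x).le_of_opNorm_le (κ.norm_coe_le_norm x) h

lemma isCompactOperator_familyOperator [ProperSpace F] (κ : C(X, E →L[ℝ] F)) :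
    IsCompactOperator (familyOperator κ) := by
  refine (isCompactOperator_iff_isCompact_closure_image_closedBall
    (familyOperator κ : E →ₗ[ℝ] C(X, F)) one_pos).mpr ?_
  let e := (ContinuousMap.isometryEquivBoundedOfCompact X F).toHomeomorph
  rw [← e.isCompact_image, e.image_closure]
  refine BoundedContinuousFunction.arzela_ascoli (closedBall 0 ‖κ‖) (isCompact_closedBall 0 _) _
    ?_ fun x => ?_
  · rintro _ x ⟨_, ⟨h, hh, rfl⟩, rfl⟩
    refine mem_closedBall_zero_iff.mpr ?_
    exact ((κ x).le_of_opNorm_le_of_le (κ.norm_coe_le_norm x)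
      (mem_closedBall_zero_iff.mp hh)).trans_eq (mul_one _)
  · refine equicontinuousAt_of_continuity_modulus (fun x' => dist (κ x) (κ x')) ?_ _
      (Eventually.of_forall ?_)
    · simpa using (continuous_const.dist κ.continuous).tendsto (f := fun x' => dist (κ x) (κ x')) x
    · rintro x' ⟨_, _, ⟨h, hh, rfl⟩, rfl⟩
      rw [dist_eq_norm, dist_eq_norm]
      exact ((κ x - κ x').le_of_opNorm_le_of_le le_rfl
        (mem_closedBall_zero_iff.mp hh)).trans_eq (mul_one _)

end CompactOperator

section IntegralOperator

variable {X Y : Type*} [TopologicalSpace X] [CompactSpace X] [TopologicalSpace Y] [CompactSpace Y]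
  [MeasurableSpace Y] [BorelSpace Y] (μ : Measure Y) [IsFiniteMeasure μ]

lemma integrable_continuousMap (f : C(Y, ℝ)) : Integrable f μ :=
  f.continuous.integrable_of_hasCompactSupport (HasCompactSupport.of_compactSpace f)

/-- Integration against `μ` as a bounded functional on `C(Y, ℝ)`. -/
noncomputable def integralFunctional : C(Y, ℝ) →L[ℝ] ℝ :=
  LinearMap.mkContinuous
    { toFun := fun f => ∫ y, f y ∂μ
      map_add' := fun f g =>
        integral_add (integrable_continuousMap μ f) (integrable_continuousMap μ g)
      map_smul' := fun c f => integral_const_mul c f }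
    (μ.real univ) fun f => by
      rw [mul_comm]
      exact norm_integral_le_of_norm_le_const (Eventually.of_forall f.norm_coe_le_norm)

/-- The integral operator `h ↦ (x ↦ ∫ y, k (x, y) * h y ∂μ)` with kernel `k`. -/
noncomputable def integralOperator (k : C(X × Y, ℝ)) : C(Y, ℝ) →L[ℝ] C(X, ℝ) :=
  familyOperator <|
    (ContinuousMap.mk _ ((ContinuousLinearMap.compL ℝ C(Y, ℝ) C(Y, ℝ) ℝ (integralFunctional μ)) ∘L
      ContinuousLinearMap.mul ℝ C(Y, ℝ)).continuous).comp k.curry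

lemma integralOperator_apply (k : C(X × Y, ℝ)) (h : C(Y, ℝ)) (x : X) :
    integralOperator μ k h x = ∫ y, k (x, y) * h y ∂μ := rfl

lemma isCompactOperator_integralOperator (k : C(X × Y, ℝ)) :
    IsCompactOperator (integralOperator μ k) :=
  isCompactOperator_familyOperator _

variable {μ} {k : C(X × Y, ℝ)}

lemma integralOperator_mono (hk : ∀ x y, 0 ≤ k (x, y)) : Monotone (integralOperator μ k) :=
  fun f g hfg x => integral_mono
    (integrable_continuousMap μ (k.curry x * f)) (integrable_continuousMap μ (k.curry x * g))
    fun y => mul_le_mul_of_nonneg_left (hfg y) (hk x y)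

lemma mul_integralOperator_le {c : ℝ} (hk : ∀ x x' y, c * k (x, y) ≤ k (x', y))
    {h : C(Y, ℝ)} (hh : 0 ≤ h) (x x' : X) :
    c * integralOperator μ k h x ≤ integralOperator μ k h x' := by
  rw [integralOperator_apply, integralOperator_apply, ← integral_const_mul]
  refine integral_mono ((integrable_continuousMap μ (k.curry x * h)).const_mul c)
    (integrable_continuousMap μ (k.curry x' * h)) fun y => ?_
  exact (mul_assoc c _ _).symm.trans_le (mul_le_mul_of_nonneg_right (hk x x' y) (hh y))

end IntegralOperator

section Hammerstein

variable {X Z : Type*} [TopologicalSpace X] [TopologicalSpace Z]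

/-- The Nemytskii (superposition) operator `y ↦ F (·, y ·)` of a continuous function `F`. -/
def nemytskii (F : C(X × Z, ℝ)) (y : C(X, Z)) : C(X, ℝ) :=
  F.comp ((ContinuousMap.id X).prodMk y)

lemma continuous_nemytskii [LocallyCompactSpace X] (F : C(X × Z, ℝ)) :
    Continuous (nemytskii F) :=
  ContinuousMap.continuous_of_continuous_uncurry _
    (by fun_prop : Continuous fun p : C(X, Z) × X => F (p.2, p.1 p.2))

variable [CompactSpace X] [MeasurableSpace X] [BorelSpace X] {μ : Measure X} [IsFiniteMeasure μ]

lemma exists_integralOperator_nemytskii_eq [T2Space X] [CompactSpace Z] (k : C(X × X, ℝ))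
    (F : C(X × Z, ℝ)) (ρ : C(ℝ, Z)) :
    ∃ y : C(X, ℝ), integralOperator μ k (nemytskii F (ρ.comp y)) = y :=
  exists_fixedPoint_of_isCompactOperator (isCompactOperator_integralOperator μ k)
    ((continuous_nemytskii F).comp ρ.continuous_postcomp) (M := ‖F‖) fun _ =>
      (ContinuousMap.norm_le _ (norm_nonneg F)).mpr fun _ => F.norm_coe_le_norm _

end Hammerstein

section Cone

variable {X : Type*} [TopologicalSpace X] [CompactSpace X] [T2Space X] [MeasurableSpace X]
  [BorelSpace X] {μ : Measure X} [IsFiniteMeasure μ] {k : C(X × X, ℝ)} {c R₁ R₂ : ℝ}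

theorem exists_integralOperator_nemytskii_eq_of_harnack (hc : c ∈ Ioo 0 1)
    (hk : ∀ x x' y, c * k (x, y) ≤ k (x', y)) (hR₁ : 0 ≤ R₁) (hR₁₂ : c * R₁ ≤ R₂)
    {F : C(X × Icc (c * R₁) R₂, ℝ)} (hF : 0 ≤ F) {g₀ g₁ : C(X, ℝ)}
    (hg₁ : ∀ p, c * R₂ ≤ p.2 → F p ≤ g₁ p.1) (hg₁R : ∀ x, integralOperator μ k g₁ x ≤ R₂)
    (hg₀ : ∀ p, (p.2 : ℝ) ≤ R₁ → g₀ p.1 ≤ F p)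
    (hg₀R : ∀ x, c * R₁ ≤ integralOperator μ k g₀ x) :
    ∃ y : C(X, Icc (c * R₁) R₂), ∀ x, integralOperator μ k (nemytskii F y) x = y x := by
  obtain ⟨hc0, hc1⟩ := hc
  have hmono : Monotone (integralOperator μ k) :=
    integralOperator_mono fun x y => by nlinarith [hk x x y]
  have hR₂ : 0 ≤ R₂ := (mul_nonneg hc0.le hR₁).trans hR₁₂
  let ρ : C(ℝ, Icc (c * R₁) R₂) := ⟨projIcc _ _ hR₁₂, continuous_projIcc⟩
  have hρ : ∀ z, (ρ z : ℝ) = max (c * R₁) (min R₂ z) := coe_projIcc _ _ hR₁₂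
  obtain ⟨z, hz⟩ := exists_integralOperator_nemytskii_eq (μ := μ) k F ρ
  have harnack : ∀ x x', c * z x ≤ z x' := by
    have := mul_integralOperator_le (μ := μ) hk (h := nemytskii F (ρ.comp z)) fun x => hF _
    rwa [hz] at this
  have lower : ∀ x, c * R₁ ≤ z x := by
    intro x
    by_contra! hx
    have hle : g₀ ≤ nemytskii F (ρ.comp z) := fun x' => hg₀ (x', ρ (z x')) <| by
      have : z x' < R₁ := lt_of_mul_lt_mul_left ((harnack x' x).trans_lt hx) hc0.le
      rw [hρ]
      exact max_le (mul_le_of_le_one_left hR₁ hc1.le) ((min_le_right _ _).trans this.le)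
    have := hmono hle x
    rw [hz] at this
    exact hx.not_ge ((hg₀R x).trans this)
  have upper : ∀ x, z x ≤ R₂ := by
    intro x
    by_contra! hx
    have hle : nemytskii F (ρ.comp z) ≤ g₁ := fun x' => hg₁ (x', ρ (z x')) <| by
      have : c * R₂ ≤ z x' := (mul_le_mul_of_nonneg_left hx.le hc0.le).trans (harnack x x')
      rw [hρ]
      exact le_max_of_le_right (le_min (mul_le_of_le_one_left hR₂ hc1.le) this)
    have := hmono hle x
    rw [hz] at this
    exact hx.not_ge (this.trans (hg₁R x))
  refine ⟨ρ.comp z, fun x => ?_⟩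
  rw [hz, ContinuousMap.comp_apply, hρ, min_eq_right (upper x), max_eq_right (lower x)]

end Cone

section Harnack

variable {ι : Type*} {s : Set ι} {w : ι → ℝ} {c R : ℝ}

lemma le_of_sInf_image_le_or_sSup_image_le (hc : 0 < c)
    (hw : ∀ i ∈ s, ∀ j ∈ s, c * w i ≤ w j) (h : sInf (w '' s) ≤ c * R ∨ sSup (w '' s) ≤ R)
    {i : ι} (hi : i ∈ s) : w i ≤ R := by
  rcases h with h | h
  · have hinf : c * w i ≤ sInf (w '' s) :=
      le_csInf ⟨_, mem_image_of_mem w hi⟩ (forall_mem_image.mpr (hw i hi))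
    exact le_of_mul_le_mul_left (hinf.trans h) hc
  · have hbdd : BddAbove (w '' s) :=
      ⟨w i / c, forall_mem_image.mpr fun j hj => (le_div_iff₀' hc).mpr (hw j hj i hi)⟩
    exact (le_csSup hbdd (mem_image_of_mem w hi)).trans h

lemma mul_le_of_le_sInf_image_or_le_sSup_image (hc : 0 < c)
    (hw : ∀ i ∈ s, ∀ j ∈ s, c * w i ≤ w j) (h : c * R ≤ sInf (w '' s) ∨ R ≤ sSup (w '' s))
    {i : ι} (hi : i ∈ s) : c * R ≤ w i := by
  rcases h with h | h
  · exact h.trans (csInf_le ⟨c * w i, forall_mem_image.mpr (hw i hi)⟩ (mem_image_of_mem w hi))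
  · have hsup : sSup (w '' s) ≤ w i / c := csSup_le ⟨_, mem_image_of_mem w hi⟩
      (forall_mem_image.mpr fun j hj => (le_div_iff₀' hc).mpr (hw j hj i hi))
    exact (le_div_iff₀' hc).mp (h.trans hsup)

end Harnack

section FredholmIcc

attribute [local instance] Measure.Subtype.measureSpace

instance isFiniteMeasure_volume_Icc (a b : ℝ) : IsFiniteMeasure (volume : Measure (Icc a b)) :=
  ⟨by simp [Measure.Subtype.volume_univ measurableSet_Icc.nullMeasurableSet]⟩

lemma integral_Icc_subtype_eq_intervalIntegral {a b : ℝ} (hab : a ≤ b) (f : ℝ → ℝ) :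
    ∫ u : Icc a b, f u = ∫ u in a..b, f u := by
  rw [integral_subtype measurableSet_Icc, integral_Icc_eq_integral_Ioc,
    intervalIntegral.integral_of_le hab]

/-- The restriction to `s × t` of a function of two variables that is continuous there. -/
def restrictProd {s t : Set ℝ} {F : ℝ → ℝ → ℝ}
    (hF : ContinuousOn (fun p : ℝ × ℝ => F p.1 p.2) (s ×ˢ t)) : C(s × t, ℝ) :=
  ⟨fun p => F p.1 p.2, hF.comp_continuous (f := fun p : s × t => ((p.1 : ℝ), (p.2 : ℝ)))
    (by fun_prop) fun p => ⟨p.1.2, p.2.2⟩⟩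

variable {a b c R₁ R₂ : ℝ} {F G : ℝ → ℝ → ℝ} {g g₀ g₁ : ℝ → ℝ}

lemma integralOperator_restrictProd (hab : a ≤ b)
    (hG : ContinuousOn (fun p : ℝ × ℝ => G p.1 p.2) (Icc a b ×ˢ Icc a b))
    {h : C(Icc a b, ℝ)} (hg : ∀ u : Icc a b, h u = g u) (t : Icc a b) :
    integralOperator volume (restrictProd hG) h t = ∫ u in a..b, G t u * g u := by
  rw [← integral_Icc_subtype_eq_intervalIntegral hab, integralOperator_apply]
  simp only [hg, restrictProd, ContinuousMap.coe_mk]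

lemma mul_intervalIntegral_le_of_harnack (hab : a ≤ b)
    (hG : ContinuousOn (fun p : ℝ × ℝ => G p.1 p.2) (Icc a b ×ˢ Icc a b))
    (hGc : ∀ t ∈ Icc a b, ∀ t' ∈ Icc a b, ∀ u ∈ Icc a b, c * G t u ≤ G t' u)
    (hg : ContinuousOn g (Icc a b)) (hg0 : ∀ u ∈ Icc a b, 0 ≤ g u) :
    ∀ t ∈ Icc a b, ∀ t' ∈ Icc a b,
      c * ∫ u in a..b, G t u * g u ≤ ∫ u in a..b, G t' u * g u := by
  intro t ht t' ht'
  have := mul_integralOperator_le (μ := volume) (k := restrictProd hG)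
    (fun t t' u => hGc t t.2 t' t'.2 u u.2) (h := ⟨_, hg.domRestrict⟩) (fun u => hg0 u u.2)
    ⟨t, ht⟩ ⟨t', ht'⟩
  rwa [integralOperator_restrictProd hab hG fun _ => rfl,
    integralOperator_restrictProd hab hG fun _ => rfl] at this

theorem exists_hammerstein_solution (hab : a ≤ b) (hc : c ∈ Ioo 0 1) (hR₁ : 0 ≤ R₁)
    (hR₁₂ : c * R₁ ≤ R₂)
    (hF : ContinuousOn (fun p : ℝ × ℝ => F p.1 p.2) (Icc a b ×ˢ Icc (c * R₁) R₂))
    (hF0 : ∀ t ∈ Icc a b, ∀ x ∈ Icc (c * R₁) R₂, 0 ≤ F t x)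
    (hG : ContinuousOn (fun p : ℝ × ℝ => G p.1 p.2) (Icc a b ×ˢ Icc a b))
    (hGc : ∀ t ∈ Icc a b, ∀ t' ∈ Icc a b, ∀ u ∈ Icc a b, c * G t u ≤ G t' u)
    (hg₁c : ContinuousOn g₁ (Icc a b))
    (hg₁ : ∀ t ∈ Icc a b, ∀ x ∈ Icc (c * R₂) R₂, F t x ≤ g₁ t)
    (hg₁R : sInf ((fun t => ∫ u in a..b, G t u * g₁ u) '' Icc a b) ≤ c * R₂ ∨
      sSup ((fun t => ∫ u in a..b, G t u * g₁ u) '' Icc a b) ≤ R₂)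
    (hg₀c : ContinuousOn g₀ (Icc a b)) (hg₀0 : ∀ t ∈ Icc a b, 0 ≤ g₀ t)
    (hg₀ : ∀ t ∈ Icc a b, ∀ x ∈ Icc (c * R₁) R₁, g₀ t ≤ F t x)
    (hg₀R : c * R₁ ≤ sInf ((fun t => ∫ u in a..b, G t u * g₀ u) '' Icc a b) ∨
      R₁ ≤ sSup ((fun t => ∫ u in a..b, G t u * g₀ u) '' Icc a b)) :
    ∃ x : ℝ → ℝ, ContinuousOn x (Icc a b) ∧ (∀ t ∈ Icc a b, x t ∈ Icc (c * R₁) R₂) ∧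
      ∀ t ∈ Icc a b, x t = ∫ u in a..b, G t u * F u (x u) := by
  have hR₂ : R₂ ∈ Icc (c * R₂) R₂ :=
    ⟨mul_le_of_le_one_left ((mul_nonneg hc.1.le hR₁).trans hR₁₂) hc.2.le, le_rfl⟩
  have hg₁0 : ∀ t ∈ Icc a b, 0 ≤ g₁ t := fun t ht =>
    (hF0 t ht R₂ ⟨hR₁₂, le_rfl⟩).trans (hg₁ t ht R₂ hR₂)
  have hbound₁ : ∀ t, integralOperator volume (restrictProd hG) ⟨_, hg₁c.domRestrict⟩ t ≤ R₂ := by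
    intro t
    rw [integralOperator_restrictProd hab hG fun _ => rfl]
    exact le_of_sInf_image_le_or_sSup_image_le hc.1
      (mul_intervalIntegral_le_of_harnack hab hG hGc hg₁c hg₁0) hg₁R t.2
  have hbound₀ :
      ∀ t, c * R₁ ≤ integralOperator volume (restrictProd hG) ⟨_, hg₀c.domRestrict⟩ t := by
    intro t
    rw [integralOperator_restrictProd hab hG fun _ => rfl]
    exact mul_le_of_le_sInf_image_or_le_sSup_image hc.1
      (mul_intervalIntegral_le_of_harnack hab hG hGc hg₀c hg₀0) hg₀R t.2
  obtain ⟨y, hy⟩ := exists_integralOperator_nemytskii_eq_of_harnack (X := Icc a b) (μ := volume)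
    (k := restrictProd hG) (F := restrictProd hF) hc (fun t t' u => hGc t t.2 t' t'.2 u u.2)
    hR₁ hR₁₂ (fun p => hF0 _ p.1.2 _ p.2.2) (fun p hp => hg₁ _ p.1.2 _ ⟨hp, p.2.2.2⟩) hbound₁
    (fun p hp => hg₀ _ p.1.2 _ ⟨p.2.2.1, hp⟩) hbound₀
  let x : ℝ → ℝ := IccExtend hab fun t => (y t : ℝ)
  have hx : ∀ t : Icc a b, x t = y t := IccExtend_val hab _
  refine ⟨x, (continuous_subtype_val.comp y.continuous).Icc_extend'.continuousOn,
    fun t ht => hx ⟨t, ht⟩ ▸ (y ⟨t, ht⟩).2, fun t ht => ?_⟩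
  exact ((hx ⟨t, ht⟩).trans (hy ⟨t, ht⟩).symm).trans
    (integralOperator_restrictProd hab hG (fun u => congrArg (F u) (hx u).symm) ⟨t, ht⟩)

end FredholmIcc

theorem statement8_general {T a m c R₁ R₂ : ℝ} {f G : ℝ → ℝ → ℝ} {g₀ g₁ : ℝ → ℝ} (hT : 0 < T)
    (hc : c ∈ Ioo 0 1) (hR₁ : 0 ≤ R₁) (hR₁₂ : c * R₁ ≤ R₂)
    (hf : ContinuousOn (fun p : ℝ × ℝ => f p.1 p.2) (Icc 0 T ×ˢ Icc (c * R₁) R₂))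
    (hf0 : ∀ t ∈ Icc 0 T, ∀ x ∈ Icc (c * R₁) R₂, 0 ≤ f t x + m ^ 2 * x)
    (hG : ContinuousOn (fun p : ℝ × ℝ => G p.1 p.2) (Icc 0 T ×ˢ Icc 0 T))
    (hGsol : ∀ h : ℝ → ℝ, ContinuousOn h (Icc 0 T) →
      IsLinSol T a m h fun t => ∫ u in (0:ℝ)..T, G t u * h u)
    (hGc : ∀ t ∈ Icc 0 T, ∀ t' ∈ Icc 0 T, ∀ u ∈ Icc 0 T, c * G t u ≤ G t' u)
    (hg₁c : ContinuousOn g₁ (Icc 0 T))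
    (hg₁ : ∀ t ∈ Icc 0 T, ∀ x ∈ Icc (c * R₂) R₂, f t x + m ^ 2 * x ≤ g₁ t)
    (hg₁R : sInf ((fun t => ∫ u in (0:ℝ)..T, G t u * g₁ u) '' Icc 0 T) ≤ c * R₂ ∨
      sSup ((fun t => ∫ u in (0:ℝ)..T, G t u * g₁ u) '' Icc 0 T) ≤ R₂)
    (hg₀c : ContinuousOn g₀ (Icc 0 T))
    (hg₀ : ∀ t ∈ Icc 0 T, 0 ≤ g₀ t ∧ ∀ x ∈ Icc (c * R₁) R₁, g₀ t ≤ f t x + m ^ 2 * x)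
    (hg₀R : c * R₁ ≤ sInf ((fun t => ∫ u in (0:ℝ)..T, G t u * g₀ u) '' Icc 0 T) ∨
      R₁ ≤ sSup ((fun t => ∫ u in (0:ℝ)..T, G t u * g₀ u) '' Icc 0 T)) :
    ∃ x : ℝ → ℝ, ContDiffOn ℝ 2 x (Icc 0 T) ∧
      (∀ t ∈ Icc 0 T, pd2 T x t + a * pd1 T x t = f t (x t)) ∧
      x 0 = x T ∧ pd1 T x 0 = pd1 T x T ∧ ∀ t ∈ Icc 0 T, c * R₁ ≤ x t ∧ x t ≤ R₂ := by
  have hF : ContinuousOn (fun p : ℝ × ℝ => f p.1 p.2 + m ^ 2 * p.2)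
      (Icc 0 T ×ˢ Icc (c * R₁) R₂) := hf.add (by fun_prop)
  obtain ⟨x, hxc, hxR, hx⟩ := exists_hammerstein_solution (F := fun t x => f t x + m ^ 2 * x)
    hT.le hc hR₁ hR₁₂ hF hf0 hG hGc hg₁c hg₁ hg₁R hg₀c (fun t ht => (hg₀ t ht).1)
    (fun t ht => (hg₀ t ht).2) hg₀R
  obtain ⟨hsmooth, hode, hbc, hbc'⟩ := hGsol (fun t => f t (x t) + m ^ 2 * x t)
    (hF.comp (continuousOn_id.prodMk hxc) fun t ht => ⟨ht, hxR t ht⟩)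
  let X : ℝ → ℝ := fun t => ∫ u in (0:ℝ)..T, G t u * (f u (x u) + m ^ 2 * x u)
  have hX : ∀ t ∈ Icc 0 T, x t = X t := hx
  refine ⟨X, hsmooth, fun t ht => ?_, hbc, hbc', fun t ht => hX t ht ▸ hxR t ht⟩
  have hode_t : pd2 T X t + a * pd1 T X t + m ^ 2 * X t = f t (x t) + m ^ 2 * x t := hode t ht
  rw [hX t ht] at hode_t
  linarith

lemma continuousOn_fst_mul_snd_rpow {X : Type*} [TopologicalSpace X] {S : Set X} {r : X → ℝ}
    (hr : ContinuousOn r S) {p : ℝ} (hp : 0 ≤ p) (U : Set ℝ) :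
    ContinuousOn (fun q : X × ℝ => r q.1 * q.2 ^ p) (S ×ˢ U) :=
  (hr.comp continuousOn_fst fun _ hq => hq.1).mul
    (continuousOn_snd.rpow_const fun _ _ => Or.inr hp)

theorem statement8 (T a m α β cm R₁ R₂ : ℝ) (r s g₀ g₁ : ℝ → ℝ)
    (hT : 0 < T) (ha : 0 ≤ a)
    (hr : ContinuousOn r (Set.Icc 0 T)) (hs : ContinuousOn s (Set.Icc 0 T))
    (hα : 0 < α) (hαβ : α < β) (hβ : β < 1)
    (hm : 0 < m) (hR₁ : 0 < R₁) (hR₁₂ : R₁ < R₂)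
    (hm' : m ^ 2 < (Real.pi / T) ^ 2 + (a / 2) ^ 2)
    (hcm : cm ∈ Set.Ioo (0:ℝ) 1)
    (hH1 : ∀ t ∈ Set.Icc 0 T, ∀ x ∈ Set.Icc (cm * R₁) R₂,
      0 ≤ r t * x ^ α - s t * x ^ β + m ^ 2 * x)
    (G : ℝ → ℝ → ℝ)
    (hGc : ContinuousOn (fun p : ℝ × ℝ => G p.1 p.2) (Set.Icc 0 T ×ˢ Set.Icc 0 T))
    (hG1 : PropG1 T a m G)
    (hGpos : ∀ t ∈ Set.Icc 0 T, ∀ u ∈ Set.Icc 0 T, 0 < G t u)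
    (hG4 : ∀ t ∈ Set.Icc 0 T, ∀ u ∈ Set.Icc 0 T, G u u ≤ G t u ∧ cm * G t u ≤ G u u)
    (hg₁c : ContinuousOn g₁ (Set.Icc 0 T))
    (hH2 : ∀ t ∈ Set.Icc 0 T, ∀ x ∈ Set.Icc (cm * R₂) R₂,
      r t * x ^ α - s t * x ^ β + m ^ 2 * x ≤ g₁ t)
    (hH34 :
      sInf ((fun t => ∫ u in (0:ℝ)..T, G t u * g₁ u) '' Set.Icc 0 T) ≤ cm * R₂ ∨
      sSup ((fun t => ∫ u in (0:ℝ)..T, G t u * g₁ u) '' Set.Icc 0 T) ≤ R₂)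
    (hg₀c : ContinuousOn g₀ (Set.Icc 0 T))
    (hH5 : ∀ t ∈ Set.Icc 0 T, 0 ≤ g₀ t ∧
      ∀ x ∈ Set.Icc (cm * R₁) R₁, g₀ t ≤ r t * x ^ α - s t * x ^ β + m ^ 2 * x)
    (hH67 :
      cm * R₁ ≤ sInf ((fun t => ∫ u in (0:ℝ)..T, G t u * g₀ u) '' Set.Icc 0 T) ∨
      R₁ ≤ sSup ((fun t => ∫ u in (0:ℝ)..T, G t u * g₀ u) '' Set.Icc 0 T)) :
    ∃ x : ℝ → ℝ, ContDiffOn ℝ 2 x (Set.Icc 0 T) ∧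
      (∀ t ∈ Set.Icc 0 T,
        pd2 T x t + a * pd1 T x t = r t * x t ^ α - s t * x t ^ β) ∧
      x 0 = x T ∧ pd1 T x 0 = pd1 T x T ∧
      ∀ t ∈ Set.Icc 0 T, cm * R₁ ≤ x t ∧ x t ≤ R₂ := by
  exact statement8_general hT hcm hR₁.le ((mul_le_of_le_one_left hR₁.le hcm.2.le).trans hR₁₂.le)
    ((continuousOn_fst_mul_snd_rpow hr hα.le _).sub
      (continuousOn_fst_mul_snd_rpow hs (hα.trans hαβ).le _)) hH1 hGc (fun h hh => (hG1 h hh).1)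
    (fun t ht t' ht' u hu => (hG4 t ht u hu).2.trans (hG4 t' ht' u hu).1) hg₁c hH2 hH34
    hg₀c hH5 hH67
end

section
/- Assume (C0): a≥0, 0<μ<1/2, c>0, T>0 and e:[0,T]→ℝ continuous; (C5): e_* > 0; and (C6): there is m>0 such that (c²/(μ e_*²))·((1/c_m^μ)e^* − e_*) ≤ m² < (π/T)²+(a/2)², where c_m∈(0,1) is a constant such that some continuous G_m:[0,T]×[0,T]→ℝ satisfies: for each continuous h:[0,T]→ℝ, t ↦ ∫₀ᵀ G_m(t,s)h(s) ds is the unique solution of x''+a x'+m² x=h, x(0)=x(T), x'(0)=x'(T); G_m>0 on [0,T]²; ∫₀ᵀ G_m(t,s) ds = 1/m² for all t; and G_m(t,s) ≥ G_m(s,s) ≥ c_m G_m(t,s) for all (t,s). Then there exists a twice continuously differentiable x:[0,T]→ℝ with 0 < x(t) ≤ (1/c_m)(e^*/c)^{1/μ} for all t∈[0,T], satisfying x''(t)+a x'(t) = (e(t)/μ)x(t)^{1−2μ} − (c/μ)x(t)^{1−μ} for all t∈[0,T], x(0)=x(T) and x'(0)=x'(T). -/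
open Set Real

/-!
The constants `α = (e_* / c) ^ (1 / μ)` and `β = (e^* / c) ^ (1 / μ)` make the right-hand side
nonnegative at `α` and nonpositive at `β`. Adding `ν² x` to both sides turns the problem into a
fixed point equation for the solution operator of `x'' + a x' + ν² x`, which is order preserving
when `(a/2)² < ν² < Λ := (π/T)² + (a/2)²`; if moreover the right-hand side plus `ν² x` is increasing
on `[α, β]`, iterating from the constant `α` converges to a solution. Monotonicity asks for
`ν² ≥ (c² / (μ e_*²)) (e^* - e_* + e_* μ)`.

That this quantity is below `Λ` comes from a lower bound on `-log c_m`. The ratio bound on `G_m`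
gives `c_m x(t) ≤ x(s)` for every supersolution of the linear problem, in particular for
`exp (m² u)`, where `u'' + a u' = -1` and `u(0) = u(T) = 0`. Since `u(T/2) Λ > 1`, this yields
`m² < -Λ log c_m`, which combined with (C6) and `c_m ^ (-μ) ≥ 1 - μ log c_m` is enough.
-/

open Filter MeasureTheory Topology

theorem exists_isFixedPt_of_monotoneOn {E : Type*} [ConditionallyCompleteLattice E]
    [TopologicalSpace E] [SupConvergenceClass E] [T2Space E] {S : Set E} {Φ : E → E} {b : E}
    (hS : IsSeqClosed S) (hb : IsLeast S b) (hbdd : BddAbove S) (hmaps : MapsTo Φ S S)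
    (hmono : MonotoneOn Φ S)
    (hcont : ∀ ⦃y : ℕ → E⦄ ⦃z : E⦄, (∀ n, y n ∈ S) → Tendsto y atTop (𝓝 z) →
      Tendsto (fun n => Φ (y n)) atTop (𝓝 (Φ z))) :
    ∃ z ∈ S, Φ z = z := by
  set y : ℕ → E := fun n => Φ^[n] b
  have hyS (n : ℕ) : y n ∈ S := hmaps.iterate n hb.1
  have hy_succ (n : ℕ) : y (n + 1) = Φ (y n) := Function.iterate_succ_apply' Φ n b
  have hy_mono : Monotone y := monotone_nat_of_le_succ fun n => by
    induction n with
    | zero => exact hb.2 (hyS 1)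
    | succ n ih =>
      rw [hy_succ n, hy_succ (n + 1)]
      exact hmono (hyS n) (hyS (n + 1)) ih
  have hlim : Tendsto y atTop (𝓝 (⨆ n, y n)) :=
    tendsto_atTop_ciSup hy_mono (hbdd.mono (range_subset_iff.2 hyS))
  refine ⟨_, hS hyS hlim, tendsto_nhds_unique ?_ ((tendsto_add_atTop_iff_nat 1).2 hlim)⟩
  simpa only [hy_succ] using hcont hyS hlim

/-- `x` is twice continuously differentiable on the line, with first and second derivatives `x₁`
and `x₂`; unlike the one-sided `pd1` and `pd2`, these need no interval. -/
structure HasTwoDerivs (x x₁ x₂ : ℝ → ℝ) : Prop where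
  hasDerivAt : ∀ t, HasDerivAt x (x₁ t) t
  hasDerivAt_fst : ∀ t, HasDerivAt x₁ (x₂ t) t
  continuous_snd : Continuous x₂

namespace HasTwoDerivs

variable {x x₁ x₂ y y₁ y₂ : ℝ → ℝ}

theorem continuous (hx : HasTwoDerivs x x₁ x₂) : Continuous x :=
  continuous_iff_continuousAt.2 fun t => (hx.hasDerivAt t).continuousAt

theorem continuous_fst (hx : HasTwoDerivs x x₁ x₂) : Continuous x₁ :=
  continuous_iff_continuousAt.2 fun t => (hx.hasDerivAt_fst t).continuousAt

theorem add (hx : HasTwoDerivs x x₁ x₂) (hy : HasTwoDerivs y y₁ y₂) :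
    HasTwoDerivs (fun t => x t + y t) (fun t => x₁ t + y₁ t) (fun t => x₂ t + y₂ t) :=
  ⟨fun t => (hx.hasDerivAt t).add (hy.hasDerivAt t),
    fun t => (hx.hasDerivAt_fst t).add (hy.hasDerivAt_fst t),
    hx.continuous_snd.add hy.continuous_snd⟩

theorem const_mul (c : ℝ) (hx : HasTwoDerivs x x₁ x₂) :
    HasTwoDerivs (fun t => c * x t) (fun t => c * x₁ t) (fun t => c * x₂ t) :=
  ⟨fun t => (hx.hasDerivAt t).const_mul c, fun t => (hx.hasDerivAt_fst t).const_mul c,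
    hx.continuous_snd.const_mul c⟩

theorem add_const (hx : HasTwoDerivs x x₁ x₂) (c : ℝ) :
    HasTwoDerivs (fun t => x t + c) x₁ x₂ :=
  ⟨fun t => (hx.hasDerivAt t).add_const c, hx.hasDerivAt_fst, hx.continuous_snd⟩

theorem exp (hx : HasTwoDerivs x x₁ x₂) :
    HasTwoDerivs (fun t => Real.exp (x t)) (fun t => Real.exp (x t) * x₁ t)
      (fun t => Real.exp (x t) * (x₂ t + x₁ t ^ 2)) := by
  have hexp (t : ℝ) := (hx.hasDerivAt t).exp
  refine ⟨hexp, fun t => ((hexp t).mul (hx.hasDerivAt_fst t)).congr_deriv (by ring), ?_⟩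
  have := hx.continuous
  have := hx.continuous_fst
  have := hx.continuous_snd
  fun_prop

theorem isLinSol {T a m : ℝ} {h : ℝ → ℝ} (hx : HasTwoDerivs x x₁ x₂) (hT : 0 < T)
    (heq : ∀ t ∈ Icc 0 T, x₂ t + a * x₁ t + m ^ 2 * x t = h t)
    (hper : x 0 = x T) (hper₁ : x₁ 0 = x₁ T) : IsLinSol T a m h x := by
  have hpd1 : EqOn (pd1 T x) x₁ (Icc 0 T) := fun t ht =>
    (hx.hasDerivAt t).hasDerivWithinAt.derivWithin (uniqueDiffOn_Icc hT t ht)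
  have hpd2 : EqOn (pd2 T x) x₂ (Icc 0 T) := fun t ht =>
    (derivWithin_congr hpd1 (hpd1 ht)).trans
      ((hx.hasDerivAt_fst t).hasDerivWithinAt.derivWithin (uniqueDiffOn_Icc hT t ht))
  have hderiv : deriv x = x₁ := funext fun t => (hx.hasDerivAt t).deriv
  have hderiv₁ : deriv x₁ = x₂ := funext fun t => (hx.hasDerivAt_fst t).deriv
  have hcont : ContDiff ℝ (1 + 1) x := by
    rw [contDiff_succ_iff_deriv, hderiv, contDiff_one_iff_deriv, hderiv₁]
    exact ⟨fun t => (hx.hasDerivAt t).differentiableAt, by simp,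
      fun t => (hx.hasDerivAt_fst t).differentiableAt, hx.continuous_snd⟩
  refine ⟨by simpa only [one_add_one_eq_two] using hcont.contDiffOn, fun t ht => ?_, hper, ?_⟩
  · rw [hpd1 ht, hpd2 ht, heq t ht]
  · rw [hpd1 (left_mem_Icc.2 hT.le), hpd1 (right_mem_Icc.2 hT.le), hper₁]

end HasTwoDerivs

section FirstOrder

variable {lam : ℂ} {T : ℝ} {h : ℝ → ℂ}

/-- The `T`-periodic solution of `z' = lam z + h` given by variation of constants; it is
meaningful when `exp (lam T) ≠ 1`. -/
noncomputable def periodicSol (lam : ℂ) (T : ℝ) (h : ℝ → ℂ) (t : ℝ) : ℂ :=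
  Complex.exp (lam * t) * (Complex.exp (lam * T) / (1 - Complex.exp (lam * T)) *
    (∫ s in (0 : ℝ)..T, Complex.exp (-lam * s) * h s) +
    ∫ s in (0 : ℝ)..t, Complex.exp (-lam * s) * h s)

theorem periodicSol_zero_eq (hlam : 1 - Complex.exp (lam * T) ≠ 0) :
    periodicSol lam T h 0 = periodicSol lam T h T := by
  simp only [periodicSol, intervalIntegral.integral_same, Complex.ofReal_zero, mul_zero,
    Complex.exp_zero]
  field_simp
  ring

theorem hasDerivAt_periodicSol (hh : Continuous h) (t : ℝ) :
    HasDerivAt (periodicSol lam T h) (lam * periodicSol lam T h t + h t) t := by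
  have hint : Continuous fun s : ℝ => Complex.exp (-lam * s) * h s := by fun_prop
  have hexp : HasDerivAt (fun t : ℝ => Complex.exp (lam * t))
      (Complex.exp (lam * t) * (lam * 1)) t :=
    ((Complex.ofRealCLM.hasDerivAt (x := t)).const_mul lam).cexp
  have hcancel : Complex.exp (lam * t) * Complex.exp (-lam * t) = 1 := by
    rw [← Complex.exp_add, neg_mul, add_neg_cancel, Complex.exp_zero]
  refine (hexp.mul ((hint.integral_hasStrictDerivAt 0 t).hasDerivAt.const_add _)).congr_deriv ?_
  rw [periodicSol]
  linear_combination h t * hcancel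

theorem continuousOn_periodicSol (hT : 0 ≤ T) (hh : IntervalIntegrable h volume 0 T) :
    ContinuousOn (periodicSol lam T h) (Icc 0 T) := by
  have hprim := intervalIntegral.continuousOn_primitive_interval'
    (hh.continuousOn_mul (f := h) (g := fun s : ℝ => Complex.exp (-lam * s)) (by fun_prop))
    left_mem_uIcc
  rw [uIcc_of_le hT] at hprim
  unfold periodicSol
  fun_prop

theorem tendsto_periodicSol {u : ℕ → ℝ → ℂ} {C : ℝ} (hu : ∀ n, Measurable (u n))
    (hbound : ∀ n s, ‖u n s‖ ≤ C) (hlim : ∀ s, Tendsto (fun n => u n s) atTop (𝓝 (h s)))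
    (t : ℝ) :
    Tendsto (fun n => periodicSol lam T (u n) t) atTop (𝓝 (periodicSol lam T h t)) := by
  have hprim (r : ℝ) : Tendsto (fun n => ∫ s in (0 : ℝ)..r, Complex.exp (-lam * s) * u n s)
      atTop (𝓝 (∫ s in (0 : ℝ)..r, Complex.exp (-lam * s) * h s)) := by
    refine intervalIntegral.tendsto_integral_filter_of_dominated_convergence
      (fun s : ℝ => ‖Complex.exp (-lam * s)‖ * C) (Eventually.of_forall fun n => ?_)
      (Eventually.of_forall fun n => Eventually.of_forall fun s _ => ?_)
      (Continuous.intervalIntegrable (by fun_prop) _ _)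
      (Eventually.of_forall fun s _ => (hlim s).const_mul _)
    · exact ((by fun_prop : Measurable fun s : ℝ => Complex.exp (-lam * s)).mul
        (hu n)).aestronglyMeasurable
    · rw [norm_mul]
      exact mul_le_mul_of_nonneg_left (hbound n s) (norm_nonneg _)
  exact (((hprim T).const_mul _).add (hprim t)).const_mul _

theorem periodicSol_const (hlam : lam ≠ 0) (hexp : 1 - Complex.exp (lam * T) ≠ 0) (d : ℂ)
    (t : ℝ) : periodicSol lam T (fun _ => d) t = -d / lam := by
  have hprim (r : ℝ) : (∫ s in (0 : ℝ)..r, Complex.exp (-lam * s) * d) =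
      (1 - Complex.exp (-(lam * r))) / lam * d := by
    rw [intervalIntegral.integral_mul_const, integral_exp_mul_complex (neg_ne_zero.mpr hlam),
      Complex.ofReal_zero, mul_zero, Complex.exp_zero, neg_mul, div_neg, ← neg_div, neg_sub]
  rw [periodicSol, hprim, hprim, Complex.exp_neg, Complex.exp_neg]
  have := Complex.exp_ne_zero (lam * t)
  have := Complex.exp_ne_zero (lam * T)
  field_simp
  ring

theorem periodicSol_eq_integral_kernel (hexp : 1 - Complex.exp (lam * T) ≠ 0)
    (hh : IntervalIntegrable h volume 0 T) {t : ℝ} (ht : t ∈ Icc 0 T) :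
    periodicSol lam T h t =
      (∫ s in (0 : ℝ)..t,
        Complex.exp (lam * (t - s : ℝ)) / (1 - Complex.exp (lam * T)) * h s) +
      ∫ s in t..T, Complex.exp (lam * (t - s + T : ℝ)) / (1 - Complex.exp (lam * T)) * h s := by
  have hsplit₁ (s : ℝ) : Complex.exp (lam * (t - s : ℝ)) / (1 - Complex.exp (lam * T)) * h s =
      Complex.exp (lam * t) / (1 - Complex.exp (lam * T)) * (Complex.exp (-lam * s) * h s) := by
    rw [show lam * (t - s : ℝ) = lam * t + -lam * s by push_cast; ring, Complex.exp_add]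
    ring
  have hsplit₂ (s : ℝ) :
      Complex.exp (lam * (t - s + T : ℝ)) / (1 - Complex.exp (lam * T)) * h s =
      Complex.exp (lam * t) * Complex.exp (lam * T) / (1 - Complex.exp (lam * T)) *
        (Complex.exp (-lam * s) * h s) := by
    rw [show lam * (t - s + T : ℝ) = lam * t + -lam * s + lam * T by push_cast; ring,
      Complex.exp_add, Complex.exp_add]
    ring
  have hint : IntervalIntegrable (fun s : ℝ => Complex.exp (-lam * s) * h s) volume 0 T :=
    hh.continuousOn_mul (by fun_prop)
  have hmem : t ∈ uIcc 0 T := Icc_subset_uIcc ht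
  simp_rw [hsplit₁, hsplit₂, intervalIntegral.integral_const_mul]
  rw [periodicSol, ← intervalIntegral.integral_add_adjacent_intervals
    (hint.mono_set (uIcc_subset_uIcc_left hmem)) (hint.mono_set (uIcc_subset_uIcc_right hmem))]
  field_simp
  ring

end FirstOrder

section Resolvent

variable {a w T : ℝ} {h k : ℝ → ℝ}

/-- A root of the characteristic polynomial `X² + a X + ((a/2)² + w²)`. -/
noncomputable def charRoot (a w : ℝ) : ℂ := ⟨-(a / 2), w⟩

/-- The `T`-periodic solution operator of `x'' + a x' + ((a/2)² + w²) x = h`, encoded as the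
scaled imaginary part of the periodic solution of `z' = charRoot a w * z + h`. -/
noncomputable def periodicResolvent (a w T : ℝ) (h : ℝ → ℝ) (t : ℝ) : ℝ :=
  (periodicSol (charRoot a w) T (fun s => h s) t).im / w

/-- The kernel of `periodicResolvent a w T`, to be evaluated at the time difference taken
modulo `T`. -/
noncomputable def periodicKernel (a w T τ : ℝ) : ℝ :=
  (Complex.exp (charRoot a w * τ) / (1 - Complex.exp (charRoot a w * T))).im / w

theorem charRoot_sq (a w : ℝ) :
    charRoot a w ^ 2 = -(a * charRoot a w) - ((a / 2) ^ 2 + w ^ 2 : ℝ) := by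
  apply Complex.ext <;> simp [charRoot, sq] <;> ring

theorem one_sub_exp_charRoot_mul_ne_zero (hw : 0 < w) (hT : 0 < T) (hwT : w * T < π) :
    1 - Complex.exp (charRoot a w * T) ≠ 0 := by
  intro h
  have him := congrArg Complex.im h
  have hsin : 0 < sin (w * T) := sin_pos_of_pos_of_lt_pi (by positivity) hwT
  simp [charRoot, Complex.exp_im, hsin.ne'] at him

theorem periodicKernel_nonneg (hw : 0 < w) (hwT : w * T < π) {τ : ℝ} (hτ : τ ∈ Icc 0 T) :
    0 ≤ periodicKernel a w T τ := by
  have hsin : 0 ≤ sin (w * τ) :=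
    sin_nonneg_of_nonneg_of_le_pi (mul_nonneg hw.le hτ.1) (by nlinarith [hτ.2])
  have hsin' : 0 ≤ sin (w * T - w * τ) :=
    sin_nonneg_of_nonneg_of_le_pi (by nlinarith [hτ.2]) (by nlinarith [hτ.1])
  rw [sin_sub] at hsin'
  refine div_nonneg ?_ hw.le
  rw [Complex.div_im, ← sub_div]
  refine div_nonneg ?_ (Complex.normSq_nonneg _)
  simp only [charRoot, Complex.exp_re, Complex.exp_im, Complex.re_mul_ofReal,
    Complex.im_mul_ofReal, Complex.sub_re, Complex.sub_im, Complex.one_re, Complex.one_im]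
  have h₁ := mul_nonneg (exp_pos (-(a / 2) * τ)).le hsin
  have h₂ := mul_nonneg (mul_pos (exp_pos (-(a / 2) * τ)) (exp_pos (-(a / 2) * T))).le hsin'
  linarith

theorem periodicResolvent_eq_integral_kernel (hw : 0 < w) (hT : 0 < T) (hwT : w * T < π)
    (hh : IntervalIntegrable h volume 0 T) {t : ℝ} (ht : t ∈ Icc 0 T) :
    periodicResolvent a w T h t = (∫ s in (0 : ℝ)..t, periodicKernel a w T (t - s) * h s) +
      ∫ s in t..T, periodicKernel a w T (t - s + T) * h s := by
  have hhC : IntervalIntegrable (fun s => (h s : ℂ)) volume 0 T :=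
    ⟨hh.1.ofReal, hh.2.ofReal⟩
  have him {p q : ℝ} {τ : ℝ → ℝ} (hτ : Continuous τ) (hp : p ∈ uIcc 0 T) (hq : q ∈ uIcc 0 T) :
      (∫ s in p..q, Complex.exp (charRoot a w * τ s) / (1 - Complex.exp (charRoot a w * T)) *
        h s).im / w = ∫ s in p..q, periodicKernel a w T (τ s) * h s := by
    have hint : IntervalIntegrable (fun s : ℝ => Complex.exp (charRoot a w * τ s) /
        (1 - Complex.exp (charRoot a w * T)) * h s) volume p q :=
      (hhC.mono_set (uIcc_subset_uIcc hp hq)).continuousOn_mul (by fun_prop)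
    have := Complex.imCLM.intervalIntegral_comp_comm hint
    simp only [Complex.imCLM_apply, Complex.im_mul_ofReal] at this
    rw [← this, ← intervalIntegral.integral_div]
    simp only [periodicKernel, mul_div_right_comm]
  rw [periodicResolvent, periodicSol_eq_integral_kernel
    (one_sub_exp_charRoot_mul_ne_zero hw hT hwT) hhC ht, Complex.add_im, add_div,
    him (τ := fun s => t - s) (by fun_prop) left_mem_uIcc (Icc_subset_uIcc ht),
    him (τ := fun s => t - s + T) (by fun_prop) (Icc_subset_uIcc ht) right_mem_uIcc]

theorem continuous_periodicKernel : Continuous (periodicKernel a w T) := by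
  unfold periodicKernel
  exact (Complex.continuous_im.comp (by fun_prop)).div_const w

theorem periodicResolvent_mono (hw : 0 < w) (hT : 0 < T) (hwT : w * T < π)
    (hh : IntervalIntegrable h volume 0 T) (hk : IntervalIntegrable k volume 0 T)
    (hhk : ∀ s ∈ Icc 0 T, h s ≤ k s) {t : ℝ} (ht : t ∈ Icc 0 T) :
    periodicResolvent a w T h t ≤ periodicResolvent a w T k t := by
  have hmono {p q : ℝ} {τ : ℝ → ℝ} (hτ : Continuous τ) (hpq : p ≤ q) (hp : p ∈ Icc 0 T)
      (hq : q ∈ Icc 0 T) (hτ_mem : ∀ s ∈ Icc p q, τ s ∈ Icc 0 T) :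
      (∫ s in p..q, periodicKernel a w T (τ s) * h s) ≤
        ∫ s in p..q, periodicKernel a w T (τ s) * k s := by
    have hsub := uIcc_subset_uIcc (Icc_subset_uIcc hp) (Icc_subset_uIcc hq)
    have hker := (continuous_periodicKernel (a := a) (w := w) (T := T)).comp hτ
    exact intervalIntegral.integral_mono_on hpq
      ((hh.mono_set hsub).continuousOn_mul hker.continuousOn)
      ((hk.mono_set hsub).continuousOn_mul hker.continuousOn) fun s hs =>
      mul_le_mul_of_nonneg_left (hhk s ⟨hp.1.trans hs.1, hs.2.trans hq.2⟩)
        (periodicKernel_nonneg hw hwT (hτ_mem s hs))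
  rw [periodicResolvent_eq_integral_kernel hw hT hwT hh ht,
    periodicResolvent_eq_integral_kernel hw hT hwT hk ht]
  refine add_le_add
    (hmono (τ := fun s => t - s) (by fun_prop) ht.1 (left_mem_Icc.2 hT.le) ht fun s hs => ?_)
    (hmono (τ := fun s => t - s + T) (by fun_prop) ht.2 ht (right_mem_Icc.2 hT.le)
      fun s hs => ?_) <;>
  constructor <;> linarith [hs.1, hs.2, ht.1, ht.2]

theorem periodicResolvent_const (hw : 0 < w) (hT : 0 < T) (hwT : w * T < π) (d t : ℝ) :
    periodicResolvent a w T (fun _ => ((a / 2) ^ 2 + w ^ 2) * d) t = d := by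
  have hroot : charRoot a w ≠ 0 := fun h => hw.ne' (congrArg Complex.im h)
  have hnormSq : Complex.normSq (charRoot a w) = (a / 2) ^ 2 + w ^ 2 := by
    rw [Complex.normSq_apply, charRoot]
    ring
  rw [periodicResolvent, periodicSol_const hroot (one_sub_exp_charRoot_mul_ne_zero hw hT hwT),
    Complex.div_im, hnormSq]
  simp only [← Complex.ofReal_neg, Complex.ofReal_im, Complex.ofReal_re, charRoot]
  field_simp
  ring

theorem continuousOn_periodicResolvent (hT : 0 ≤ T) (hh : IntervalIntegrable h volume 0 T) :
    ContinuousOn (periodicResolvent a w T h) (Icc 0 T) :=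
  (Complex.continuous_im.comp_continuousOn
    (continuousOn_periodicSol hT ⟨hh.1.ofReal, hh.2.ofReal⟩)).div_const w

theorem tendsto_periodicResolvent {u : ℕ → ℝ → ℝ} {C : ℝ} (hu : ∀ n, Measurable (u n))
    (hbound : ∀ n s, |u n s| ≤ C) (hlim : ∀ s, Tendsto (fun n => u n s) atTop (𝓝 (h s)))
    (t : ℝ) :
    Tendsto (fun n => periodicResolvent a w T (u n) t) atTop
      (𝓝 (periodicResolvent a w T h t)) := by
  have hsol := tendsto_periodicSol (lam := charRoot a w) (T := T) (C := C)
    (fun n => Complex.measurable_ofReal.comp (hu n))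
    (fun n s => (Complex.norm_real _).trans_le (hbound n s))
    (fun s => (Complex.continuous_ofReal.tendsto _).comp (hlim s)) t
  exact ((Complex.continuous_im.tendsto _).comp hsol).div_const w

theorem isLinSol_periodicResolvent {ν : ℝ} (hw : 0 < w) (hT : 0 < T) (hwT : w * T < π)
    (hν : ν ^ 2 = (a / 2) ^ 2 + w ^ 2) (hh : Continuous h) :
    IsLinSol T a ν h (periodicResolvent a w T h) := by
  set lam := charRoot a w with hlam
  set z := periodicSol lam T (fun s => (h s : ℂ)) with hz
  have hhC : Continuous fun s => (h s : ℂ) := Complex.continuous_ofReal.comp hh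
  have hz' (t : ℝ) : HasDerivAt z (lam * z t + h t) t := hasDerivAt_periodicSol hhC t
  have hz_cont : Continuous z := continuous_iff_continuousAt.2 fun t => (hz' t).continuousAt
  have him {F : ℝ → ℂ} {F' : ℂ} {t : ℝ} (hF : HasDerivAt F F' t) :
      HasDerivAt (fun t => (F t).im / w) (F'.im / w) t :=
    (Complex.imCLM.hasFDerivAt.comp_hasDerivAt t hF).div_const w
  have hz_per : z 0 = z T := periodicSol_zero_eq (one_sub_exp_charRoot_mul_ne_zero hw hT hwT)
  have hderivs : HasTwoDerivs (periodicResolvent a w T h) (fun t => (lam * z t).im / w)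
      (fun t => (lam * (lam * z t + h t)).im / w) :=
    ⟨fun t => (him (hz' t)).congr_deriv (by
        simp only [Complex.add_im, Complex.ofReal_im, add_zero]),
      fun t => him ((hz' t).const_mul lam),
      (Complex.continuous_im.comp (by fun_prop)).div_const w⟩
  refine hderivs.isLinSol hT (fun t _ => ?_) ?_ ?_
  · have hsecond : lam * (lam * z t + h t) + a * (lam * z t) + (ν ^ 2 : ℝ) * z t = lam * h t := by
      rw [hν]
      linear_combination z t * charRoot_sq a w
    have := congrArg (fun ζ : ℂ => ζ.im / w) hsecond
    simp only [Complex.add_im, Complex.im_ofReal_mul,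
      Complex.im_mul_ofReal] at this
    rw [show lam.im = w from rfl] at this
    rw [periodicResolvent, ← hlam, ← hz]
    field_simp at this ⊢
    linarith
  · simp only [periodicResolvent, ← hlam, ← hz, hz_per]
  · simp only [hz_per]

end Resolvent

section Existence

variable {T a ν α β : ℝ} {g : ℝ → ℝ → ℝ}

theorem exists_frequency (hT : 0 < T) (hlo : (a / 2) ^ 2 < ν ^ 2)
    (hhi : ν ^ 2 < (π / T) ^ 2 + (a / 2) ^ 2) :
    ∃ w, 0 < w ∧ w * T < π ∧ ν ^ 2 = (a / 2) ^ 2 + w ^ 2 := by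
  refine ⟨√(ν ^ 2 - (a / 2) ^ 2), sqrt_pos.2 (sub_pos.2 hlo), ?_, ?_⟩
  · rw [← lt_div_iff₀ hT]
    exact (sqrt_lt' (by positivity)).2 (by linarith)
  · rw [sq_sqrt (sub_pos.2 hlo).le]
    ring

/-- The Nemytskii operator `y ↦ g(·, y(·))`, extended from `[0, T]` to the line by constants. -/
noncomputable def superposition (hT : 0 ≤ T) (g : ℝ → ℝ → ℝ) (y : Icc 0 T → ℝ) : ℝ → ℝ :=
  IccExtend hT fun s => g s (y s)

/-- The measurable functions on `[0, T]` with values in `[α, β]`: the order interval in which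
the monotone iteration takes place. -/
def measurableOrderInterval (T α β : ℝ) : Set (Icc (0 : ℝ) T → ℝ) :=
  {y | Measurable y ∧ ∀ t, y t ∈ Icc α β}

theorem isSeqClosed_measurableOrderInterval : IsSeqClosed (measurableOrderInterval T α β) :=
  fun _ _ hy hlim => ⟨measurable_of_tendsto_metrizable (fun n => (hy n).1) hlim, fun t =>
    isClosed_Icc.mem_of_tendsto (tendsto_pi_nhds.1 hlim t) (Eventually.of_forall fun n =>
      (hy n).2 t)⟩

theorem measurable_superposition (hT : 0 ≤ T)
    (hg : ContinuousOn (Function.uncurry g) (Icc 0 T ×ˢ Icc α β)) {y : Icc 0 T → ℝ}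
    (hy : y ∈ measurableOrderInterval T α β) : Measurable (superposition hT g y) := by
  have hpair : Measurable fun s : Icc 0 T =>
      (⟨(s, y s), s.2, hy.2 s⟩ : ↥(Icc 0 T ×ˢ Icc α β)) :=
    (measurable_subtype_coe.prodMk hy.1).subtype_mk
  exact (hg.domRestrict.measurable.comp hpair).comp continuous_projIcc.measurable

theorem tendsto_superposition (hT : 0 ≤ T)
    (hg : ContinuousOn (Function.uncurry g) (Icc 0 T ×ˢ Icc α β))
    {y : ℕ → Icc 0 T → ℝ} {z : Icc 0 T → ℝ} (hy : ∀ n, y n ∈ measurableOrderInterval T α β)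
    (hlim : Tendsto y atTop (𝓝 z)) (s : ℝ) :
    Tendsto (fun n => superposition hT g (y n) s) atTop (𝓝 (superposition hT g z s)) := by
  have hz := isSeqClosed_measurableOrderInterval hy hlim
  set r := projIcc 0 T hT s
  have hpair : Tendsto (fun n => ((r : ℝ), y n r)) atTop (𝓝[Icc 0 T ×ˢ Icc α β] (↑r, z r)) :=
    tendsto_nhdsWithin_iff.2 ⟨tendsto_const_nhds.prodMk_nhds (tendsto_pi_nhds.1 hlim r),
      Eventually.of_forall fun n => ⟨r.2, (hy n).2 r⟩⟩
  exact (hg (↑r, z r) ⟨r.2, hz.2 r⟩).tendsto.comp hpair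

theorem exists_bound_superposition (hT : 0 ≤ T)
    (hg : ContinuousOn (Function.uncurry g) (Icc 0 T ×ˢ Icc α β)) :
    ∃ C, ∀ y ∈ measurableOrderInterval T α β, ∀ s, |superposition hT g y s| ≤ C := by
  obtain ⟨C, hC⟩ := (isCompact_Icc.prod isCompact_Icc).exists_bound_of_continuousOn hg
  exact ⟨C, fun y hy s => hC (_, _) ⟨(projIcc 0 T hT s).2, hy.2 _⟩⟩

theorem intervalIntegrable_superposition (hT : 0 ≤ T)
    (hg : ContinuousOn (Function.uncurry g) (Icc 0 T ×ˢ Icc α β)) {y : Icc 0 T → ℝ}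
    (hy : y ∈ measurableOrderInterval T α β) :
    IntervalIntegrable (superposition hT g y) volume 0 T := by
  obtain ⟨C, hC⟩ := exists_bound_superposition hT hg
  exact (intervalIntegrable_const (c := C)).mono_fun'
    (measurable_superposition hT hg hy).aestronglyMeasurable (Eventually.of_forall (hC y hy))

theorem monotoneOn_superposition (hT : 0 ≤ T) (hmono : ∀ t ∈ Icc 0 T, MonotoneOn (g t) (Icc α β)) :
    MonotoneOn (superposition hT g) (measurableOrderInterval T α β) :=
  fun _ hy _ hz hyz s => hmono _ (projIcc 0 T hT s).2 (hy.2 _) (hz.2 _) (hyz _)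

theorem superposition_mem_Icc (hT : 0 ≤ T) (hαβ : α ≤ β)
    (hmono : ∀ t ∈ Icc 0 T, MonotoneOn (g t) (Icc α β))
    (hα : ∀ t ∈ Icc 0 T, ν ^ 2 * α ≤ g t α) (hβ : ∀ t ∈ Icc 0 T, g t β ≤ ν ^ 2 * β)
    {y : Icc 0 T → ℝ} (hy : y ∈ measurableOrderInterval T α β) (s : ℝ) :
    superposition hT g y s ∈ Icc (ν ^ 2 * α) (ν ^ 2 * β) := by
  have hr := (projIcc 0 T hT s).2
  have hyr := hy.2 (projIcc 0 T hT s)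
  exact ⟨(hα _ hr).trans (hmono _ hr (left_mem_Icc.2 hαβ) hyr hyr.1),
    (hmono _ hr hyr (right_mem_Icc.2 hαβ) hyr.2).trans (hβ _ hr)⟩

theorem exists_eqOn_periodicResolvent {w : ℝ} (hw : 0 < w) (hT : 0 < T) (hwT : w * T < π)
    (hν : ν ^ 2 = (a / 2) ^ 2 + w ^ 2) (hαβ : α ≤ β)
    (hg : ContinuousOn (Function.uncurry g) (Icc 0 T ×ˢ Icc α β))
    (hmono : ∀ t ∈ Icc 0 T, MonotoneOn (g t) (Icc α β))
    (hα : ∀ t ∈ Icc 0 T, ν ^ 2 * α ≤ g t α) (hβ : ∀ t ∈ Icc 0 T, g t β ≤ ν ^ 2 * β) :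
    ∃ y ∈ measurableOrderInterval T α β,
      ∀ t : Icc 0 T, periodicResolvent a w T (superposition hT.le g y) t = y t := by
  set N := superposition hT.le g
  have hint {y} (hy : y ∈ measurableOrderInterval T α β) :=
    intervalIntegrable_superposition hT.le hg hy
  have hcont {y} (hy : y ∈ measurableOrderInterval T α β) :=
    continuousOn_periodicResolvent (a := a) (w := w) hT.le (hint hy)
  have hbounds {y} (hy : y ∈ measurableOrderInterval T α β) (s : ℝ) :
      N y s ∈ Icc (((a / 2) ^ 2 + w ^ 2) * α) (((a / 2) ^ 2 + w ^ 2) * β) :=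
    hν ▸ superposition_mem_Icc hT.le hαβ hmono hα hβ hy s
  obtain ⟨C, hC⟩ := exists_bound_superposition hT.le hg
  have hmaps {y} (hy : y ∈ measurableOrderInterval T α β) (t : Icc 0 T) :
      periodicResolvent a w T (N y) t ∈ Icc α β := by
    rw [← periodicResolvent_const (a := a) hw hT hwT α t,
      ← periodicResolvent_const (a := a) hw hT hwT β t]
    exact ⟨periodicResolvent_mono hw hT hwT intervalIntegrable_const (hint hy)
        (fun s _ => (hbounds hy s).1) t.2,
      periodicResolvent_mono hw hT hwT (hint hy) intervalIntegrable_const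
        (fun s _ => (hbounds hy s).2) t.2⟩
  obtain ⟨y, hy, hfix⟩ := exists_isFixedPt_of_monotoneOn
    (Φ := fun y t => periodicResolvent a w T (N y) t) (S := measurableOrderInterval T α β)
    (b := fun _ => α) isSeqClosed_measurableOrderInterval
    ⟨⟨measurable_const, fun _ => left_mem_Icc.2 hαβ⟩, fun y hy t => (hy.2 t).1⟩
    ⟨fun _ => β, fun y hy t => (hy.2 t).2⟩
    (fun y hy => ⟨(hcont hy).domRestrict.measurable, hmaps hy⟩)
    (fun y hy z hz hyz t => periodicResolvent_mono hw hT hwT (hint hy) (hint hz)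
      (fun s _ => monotoneOn_superposition hT.le hmono hy hz hyz s) t.2)
    fun y z hy hlim => tendsto_pi_nhds.2 fun t => tendsto_periodicResolvent
      (fun n => measurable_superposition hT.le hg (hy n)) (fun n => hC _ (hy n))
      (tendsto_superposition hT.le hg hy hlim) t
  exact ⟨y, hy, congrFun hfix⟩

theorem exists_isLinSol_of_monotoneOn (hT : 0 < T) (hlo : (a / 2) ^ 2 < ν ^ 2)
    (hhi : ν ^ 2 < (π / T) ^ 2 + (a / 2) ^ 2) (hαβ : α ≤ β)
    (hg : ContinuousOn (Function.uncurry g) (Icc 0 T ×ˢ Icc α β))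
    (hmono : ∀ t ∈ Icc 0 T, MonotoneOn (g t) (Icc α β))
    (hα : ∀ t ∈ Icc 0 T, ν ^ 2 * α ≤ g t α) (hβ : ∀ t ∈ Icc 0 T, g t β ≤ ν ^ 2 * β) :
    ∃ x, IsLinSol T a ν (fun t => g t (x t)) x ∧ ∀ t ∈ Icc 0 T, x t ∈ Icc α β := by
  obtain ⟨w, hw, hwT, hν⟩ := exists_frequency hT hlo hhi
  obtain ⟨y, hy, hfix⟩ := exists_eqOn_periodicResolvent (a := a) hw hT hwT hν hαβ hg hmono hα hβ
  have hy_cont : Continuous y := by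
    rw [← funext hfix]
    exact (continuousOn_periodicResolvent hT.le
      (intervalIntegrable_superposition hT.le hg hy)).domRestrict
  have hN : Continuous (superposition hT.le g y) :=
    Continuous.Icc_extend' (hg.comp_continuous (continuous_subtype_val.prodMk hy_cont)
      fun s => ⟨s.2, hy.2 s⟩)
  obtain ⟨hsmooth, heq, hper⟩ := isLinSol_periodicResolvent hw hT hwT hν hN
  refine ⟨_, ⟨hsmooth, fun t ht => (heq t ht).trans ?_, hper⟩, fun t ht => ?_⟩
  · exact (IccExtend_of_mem _ _ ht).trans (congrArg (g t) (hfix ⟨t, ht⟩).symm)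
  · exact (hfix ⟨t, ht⟩).symm ▸ hy.2 ⟨t, ht⟩

end Existence

section Nonlinearity

variable {μ c A B M r x : ℝ}

/-- The right-hand side of the equation at position `x`, with `r` the value of the coefficient
`e`. -/
noncomputable def forcing (μ c r x : ℝ) : ℝ :=
  r / μ * x ^ (1 - 2 * μ) - c / μ * x ^ (1 - μ)

theorem rpow_one_div_rpow (hμ : μ ≠ 0) (hr : 0 ≤ r) : (r ^ (1 / μ)) ^ μ = r := by
  rw [one_div, rpow_inv_rpow hr hμ]

theorem forcing_eq (hx : 0 < x) :
    forcing μ c r x = x ^ (1 - 2 * μ) / μ * (r - c * x ^ μ) := by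
  rw [forcing, show 1 - μ = 1 - 2 * μ + μ by ring, rpow_add hx]
  ring

theorem forcing_nonneg_of_le (hμ : 0 < μ) (hc : 0 < c) (hA : 0 < A) (hr : A ≤ r) :
    0 ≤ forcing μ c r ((A / c) ^ (1 / μ)) := by
  have hpos : 0 < (A / c) ^ (1 / μ) := by positivity
  rw [forcing_eq hpos, rpow_one_div_rpow hμ.ne' (by positivity),
    mul_div_cancel₀ _ hc.ne']
  exact mul_nonneg (by positivity) (sub_nonneg.2 hr)

theorem forcing_nonpos_of_le (hμ : 0 < μ) (hc : 0 < c) (hB : 0 < B) (hr : r ≤ B) :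
    forcing μ c r ((B / c) ^ (1 / μ)) ≤ 0 := by
  have hpos : 0 < (B / c) ^ (1 / μ) := by positivity
  rw [forcing_eq hpos, rpow_one_div_rpow hμ.ne' (by positivity),
    mul_div_cancel₀ _ hc.ne']
  exact mul_nonpos_of_nonneg_of_nonpos (by positivity) (sub_nonpos.2 hr)

theorem continuousOn_forcing_add_mul {e : ℝ → ℝ} {S : Set ℝ} (hc : 0 < c)
    (hA : 0 < A) (he : ContinuousOn e S) :
    ContinuousOn (Function.uncurry fun t x => forcing μ c (e t) x + M * x)
      (S ×ˢ Icc ((A / c) ^ (1 / μ)) ((B / c) ^ (1 / μ))) := by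
  have he' : ContinuousOn (fun p : ℝ × ℝ => e p.1)
      (S ×ˢ Icc ((A / c) ^ (1 / μ)) ((B / c) ^ (1 / μ))) :=
    he.comp continuousOn_fst fun p hp => hp.1
  have hpow (b : ℝ) : ContinuousOn (fun p : ℝ × ℝ => p.2 ^ b)
      (S ×ˢ Icc ((A / c) ^ (1 / μ)) ((B / c) ^ (1 / μ))) :=
    continuousOn_snd.rpow_const fun p hp =>
      Or.inl ((rpow_pos_of_pos (div_pos hA hc) _).trans_le hp.2.1).ne'
  exact (((he'.div_const μ).mul (hpow _)).sub ((hpow _).const_mul (c / μ))).add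
    (continuousOn_snd.const_mul M)

theorem weighted_defect_le {z : ℝ} (hμ : 0 < μ) (hμ' : μ ≤ 1 / 2) (hc : 0 < c) (hA : 0 < A)
    (hAB : A ≤ B) (hAz : A * z ≤ c) (hBz : c ≤ B * z) :
    z * (c * μ + (1 - 2 * μ) * (c - A * z)) ≤ (c / A) ^ 2 * (B - A + A * μ) := by
  have hz : z ≤ c / A := by rwa [le_div_iff₀' hA]
  have hdefect : c - A * z ≤ c / A * (B - A) := by nlinarith
  have hfactor : c * μ + (1 - 2 * μ) * (c - A * z) ≤ c / A * (B - A + A * μ) := by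
    have : c / A * (A * μ) = c * μ := by field_simp
    nlinarith
  have hfactor_nonneg : 0 ≤ c * μ + (1 - 2 * μ) * (c - A * z) :=
    add_nonneg (by positivity) (mul_nonneg (by linarith) (by linarith))
  calc z * (c * μ + (1 - 2 * μ) * (c - A * z))
      ≤ c / A * (c / A * (B - A + A * μ)) := mul_le_mul hz hfactor hfactor_nonneg (by positivity)
    _ = (c / A) ^ 2 * (B - A + A * μ) := by ring

theorem hasDerivAt_forcing_add_mul (hx : 0 < x) :
    HasDerivAt (fun x => forcing μ c r x + M * x)
      (r / μ * ((1 - 2 * μ) * (x ^ μ)⁻¹ ^ 2) - c / μ * ((1 - μ) * (x ^ μ)⁻¹) + M) x := by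
  have hinv : x ^ (1 - μ - 1) = (x ^ μ)⁻¹ := by rw [← rpow_neg hx.le]; ring_nf
  have hinv_sq : x ^ (1 - 2 * μ - 1) = (x ^ μ)⁻¹ ^ 2 := by
    rw [← rpow_neg hx.le, ← rpow_mul_natCast hx.le]; push_cast; ring_nf
  refine HasDerivAt.congr_deriv
    (f' := r / μ * ((1 - 2 * μ) * x ^ (1 - 2 * μ - 1)) -
      c / μ * ((1 - μ) * x ^ (1 - μ - 1)) + M * 1) ?_ (by rw [hinv, hinv_sq, mul_one])
  exact (((hasDerivAt_rpow_const (Or.inl hx.ne')).const_mul _).sub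
    ((hasDerivAt_rpow_const (Or.inl hx.ne')).const_mul _)).add ((hasDerivAt_id x).const_mul M)

theorem rpow_mem_Icc_div (hμ : 0 < μ) (hc : 0 < c) (hA : 0 < A) (hAB : A ≤ B)
    (hx : x ∈ Icc ((A / c) ^ (1 / μ)) ((B / c) ^ (1 / μ))) : x ^ μ ∈ Icc (A / c) (B / c) := by
  have hA' : 0 < A / c := div_pos hA hc
  have hB' : 0 < B / c := div_pos (hA.trans_le hAB) hc
  have hx0 : 0 < x := (rpow_pos_of_pos hA' _).trans_le hx.1
  constructor
  · rw [← rpow_one_div_rpow hμ.ne' hA'.le]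
    exact rpow_le_rpow (by positivity) hx.1 hμ.le
  · rw [← rpow_one_div_rpow hμ.ne' hB'.le]
    exact rpow_le_rpow hx0.le hx.2 hμ.le

theorem monotoneOn_forcing_add_mul (hμ : 0 < μ) (hμ' : μ ≤ 1 / 2) (hc : 0 < c)
    (hA : 0 < A) (hAB : A ≤ B) (hr : A ≤ r)
    (hM : c ^ 2 / (μ * A ^ 2) * (B - A + A * μ) ≤ M) :
    MonotoneOn (fun x => forcing μ c r x + M * x)
      (Icc ((A / c) ^ (1 / μ)) ((B / c) ^ (1 / μ))) := by
  have hpos : ∀ x ∈ Icc ((A / c) ^ (1 / μ)) ((B / c) ^ (1 / μ)), 0 < x := fun x hx =>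
    lt_of_lt_of_le (by positivity) hx.1
  refine monotoneOn_of_hasDerivWithinAt_nonneg (convex_Icc _ _)
    (fun x hx => (hasDerivAt_forcing_add_mul (hpos x hx)).continuousAt.continuousWithinAt)
    (fun x hx => (hasDerivAt_forcing_add_mul
      (hpos x (interior_subset hx))).hasDerivWithinAt) fun x hx => ?_
  have hx0 := hpos x (interior_subset hx)
  have hpow := rpow_pos_of_pos hx0 μ
  obtain ⟨hAx, hxB⟩ := rpow_mem_Icc_div hμ hc hA hAB (interior_subset hx)
  set z := (x ^ μ)⁻¹
  have hAz : A * z ≤ c := by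
    rw [← div_eq_mul_inv, div_le_iff₀ hpow]
    exact (div_le_iff₀' hc).1 hAx
  have hBz : c ≤ B * z := by
    rw [← div_eq_mul_inv, le_div_iff₀ hpow]
    exact (le_div_iff₀' hc).1 hxB
  have hslope : z * (c * μ + (1 - 2 * μ) * (c - A * z)) / μ ≤ M := by
    refine le_trans
      (div_le_div_of_nonneg_right (weighted_defect_le hμ hμ' hc hA hAB hAz hBz) hμ.le)
      (le_trans (le_of_eq ?_) hM)
    field_simp
  have hr_slope : 0 ≤ (r - A) / μ * ((1 - 2 * μ) * z ^ 2) :=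
    mul_nonneg (div_nonneg (by linarith) hμ.le) (mul_nonneg (by linarith) (sq_nonneg z))
  calc 0 ≤ (r - A) / μ * ((1 - 2 * μ) * z ^ 2) +
        (M - z * (c * μ + (1 - 2 * μ) * (c - A * z)) / μ) := add_nonneg hr_slope (by linarith)
    _ = r / μ * ((1 - 2 * μ) * z ^ 2) - c / μ * ((1 - μ) * z) + M := by field_simp; ring

theorem slope_lt_of_kernel_bounds {q Λ cm : ℝ} (hμ : 0 < μ) (hA : 0 < A) (hAB : A ≤ B)
    (hcm : 0 < cm) (hq0 : 0 ≤ q)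
    (hC6 : c ^ 2 / (μ * A ^ 2) * (B / cm ^ μ - A) ≤ q) (hqΛ : q < Λ)
    (hcmΛ : q < -log cm * Λ) : c ^ 2 / (μ * A ^ 2) * (B - A + A * μ) < Λ := by
  set κ := c ^ 2 / (μ * A ^ 2)
  have hκ0 : 0 ≤ κ := by positivity
  have hB : 0 < B := hA.trans_le hAB
  -- `cm ^ (-μ) = exp (-μ log cm) ≥ 1 - μ log cm`
  have hq : κ * (B * (1 + -log cm * μ) - A) ≤ q := by
    refine le_trans (mul_le_mul_of_nonneg_left (sub_le_sub_right ?_ A) hκ0) hC6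
    rw [div_eq_mul_inv, ← rpow_neg hcm.le, rpow_def_of_pos hcm]
    exact mul_le_mul_of_nonneg_left (by linarith [add_one_le_exp (log cm * -μ)]) hB.le
  have hgap : 0 ≤ κ * (B - A) := mul_nonneg hκ0 (sub_nonneg.2 hAB)
  have hμgap : 0 ≤ κ * μ * (B - A) := by positivity
  rcases le_total 1 (-log cm) with hL | hL
  · nlinarith [mul_nonneg (sub_nonneg.2 hL) (by positivity : 0 ≤ κ * μ * B)]
  · have hL0 : 0 < -log cm := pos_of_mul_pos_left (hq0.trans_lt hcmΛ) (hq0.trans hqΛ.le)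
    refine lt_of_mul_lt_mul_left (lt_of_le_of_lt ?_ hcmΛ) hL0.le
    nlinarith [mul_nonneg (sub_nonneg.2 hL) hgap, mul_nonneg hL0.le hμgap]

end Nonlinearity

theorem two_mul_mul_cosh_le {y : ℝ} (hy : 0 ≤ y) : 2 * y * cosh y ≤ (2 + y ^ 2) * sinh y := by
  have hderiv (y : ℝ) : HasDerivAt (fun y => (2 + y ^ 2) * sinh y - 2 * y * cosh y)
      (y ^ 2 * cosh y) y := by
    refine ((((hasDerivAt_pow 2 y).const_add 2).mul (hasDerivAt_sinh y)).sub
      (((hasDerivAt_id y).const_mul 2).mul (hasDerivAt_cosh y))).congr_deriv ?_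
    simp
    ring
  have hmono := monotone_of_hasDerivAt_nonneg hderiv fun y =>
    mul_nonneg (sq_nonneg y) (cosh_pos y).le
  have := hmono hy
  simp at this
  linarith

theorem two_div_le_tanh_div {y : ℝ} (hy : y ≠ 0) : 2 / (2 + y ^ 2) ≤ tanh y / y := by
  wlog hpos : 0 < y generalizing y
  · have := this (neg_ne_zero.2 hy) (neg_pos.2 (lt_of_le_of_ne (not_lt.1 hpos) hy))
    rwa [tanh_neg, neg_div_neg_eq, neg_sq] at this
  rw [tanh_eq_sinh_div_cosh, div_div, div_le_div_iff₀ (by positivity)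
    (mul_pos (cosh_pos y) hpos)]
  linarith [two_mul_mul_cosh_le hpos.le]

theorem one_sub_exp_div_one_sub_exp {y : ℝ} (hy : y ≠ 0) :
    (1 - exp (-(2 * y))) / (1 - exp (-(4 * y))) = (1 + tanh y) / 2 := by
  have hne : 1 - exp (-(4 * y)) ≠ 0 := sub_ne_zero.2 fun h => by
    rw [eq_comm, exp_eq_one_iff] at h
    exact hy (by linarith)
  have h2 : exp (-(2 * y)) = exp (-y) ^ 2 := by rw [← exp_nat_mul]; ring_nf
  have h4 : exp (-(4 * y)) = exp (-y) ^ 4 := by rw [← exp_nat_mul]; ring_nf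
  have hinv : exp y = (exp (-y))⁻¹ := by rw [exp_neg, inv_inv]
  rw [h4] at hne
  have := exp_pos (-y)
  rw [tanh_eq, h2, h4, hinv]
  field_simp
  ring

section KernelConstant

variable {T a m cm : ℝ} {G : ℝ → ℝ → ℝ}

theorem IsLinSol.mul_le_of_nonneg {h x : ℝ → ℝ} (hT : 0 ≤ T)
    (hGc : ContinuousOn (Function.uncurry G) (Icc 0 T ×ˢ Icc 0 T)) (hG1 : PropG1 T a m G)
    (hG : ∀ t ∈ Icc 0 T, ∀ s ∈ Icc 0 T, ∀ u ∈ Icc 0 T, cm * G t u ≤ G s u)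
    (hh : ContinuousOn h (Icc 0 T)) (hh0 : ∀ u ∈ Icc 0 T, 0 ≤ h u) (hx : IsLinSol T a m h x)
    {t s : ℝ} (ht : t ∈ Icc 0 T) (hs : s ∈ Icc 0 T) : cm * x t ≤ x s := by
  have hint {r : ℝ} (hr : r ∈ Icc 0 T) :
      IntervalIntegrable (fun u => G r u * h u) volume 0 T := by
    rw [← uIcc_of_le hT] at *
    exact ((hGc.comp (continuousOn_const.prodMk continuousOn_id) fun u hu =>
      ⟨hr, hu⟩).mul hh).intervalIntegrable
  rw [(hG1 h hh).2 x hx t ht, (hG1 h hh).2 x hx s hs, ← intervalIntegral.integral_const_mul]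
  refine intervalIntegral.integral_mono_on hT ((hint ht).const_mul cm) (hint hs) fun u hu => ?_
  rw [← mul_assoc]
  exact mul_le_mul_of_nonneg_right (hG t ht s hs u hu) (hh0 u hu)

theorem exists_power_kink {a m : ℝ} (hT : 0 < T) {n : ℕ} (hn : |a| * T ≤ n) :
    ∃ κ κ₁ κ₂ : ℝ → ℝ, HasTwoDerivs κ κ₁ κ₂ ∧ κ 0 = κ T ∧ κ₁ T = κ₁ 0 + 1 ∧
      ∀ t ∈ Icc 0 T, |κ t| ≤ T / (n + 2) ∧
        -((|a| + m ^ 2 * T) / (n + 2)) ≤ κ₂ t + a * κ₁ t + m ^ 2 * κ t := by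
  have hpow (k : ℕ) (t : ℝ) :
      HasDerivAt (fun t => (t / T) ^ (k + 1)) ((k + 1) / T * (t / T) ^ k) t := by
    refine (((hasDerivAt_id t).div_const T).pow (k + 1)).congr_deriv ?_
    simp only [id, Nat.cast_add, Nat.cast_one, Nat.add_sub_cancel]
    ring
  refine ⟨fun t => T / (n + 2) * ((t / T) ^ (n + 2) - t / T),
    fun t => (t / T) ^ (n + 1) - 1 / (n + 2), fun t => (n + 1) / T * (t / T) ^ n,
    ⟨fun t => ?_, fun t => (hpow n t).sub_const _, by fun_prop⟩, by simp [hT.ne'],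
    by simp [hT.ne', neg_add_eq_sub], fun t ht => ?_⟩
  · refine (((hpow (n + 1) t).sub ((hasDerivAt_id t).div_const T)).const_mul _).congr_deriv ?_
    push_cast
    field_simp
    ring
  have hσ : t / T ∈ Icc 0 1 := ⟨div_nonneg ht.1 hT.le, (div_le_one hT).2 ht.2⟩
  set σ := t / T
  have hpow_mem (k : ℕ) : σ ^ k ∈ Icc 0 1 := ⟨pow_nonneg hσ.1 k, pow_le_one₀ hσ.1 hσ.2⟩
  have hκ : |T / (n + 2) * (σ ^ (n + 2) - σ)| ≤ T / (n + 2) := by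
    rw [abs_mul, abs_of_pos (by positivity)]
    refine mul_le_of_le_one_right (by positivity) (abs_le.2 ?_)
    constructor <;> linarith [(hpow_mem (n + 2)).1, (hpow_mem (n + 2)).2, hσ.1, hσ.2]
  have hlead : 0 ≤ σ ^ n * ((n + 1) / T + a * σ) := by
    have hnT : |a| ≤ (n + 1) / T := (le_div_iff₀ hT).2 (by linarith)
    exact mul_nonneg (hpow_mem n).1 (by nlinarith [abs_nonneg a, neg_abs_le a, hσ.1, hσ.2])
  refine ⟨hκ, ?_⟩
  calc -((|a| + m ^ 2 * T) / (n + 2)) = -(|a| / (n + 2)) + m ^ 2 * -(T / (n + 2)) := by ring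
    _ ≤ σ ^ n * ((n + 1) / T + a * σ) - a / (n + 2) +
        m ^ 2 * (T / (n + 2) * (σ ^ (n + 2) - σ)) := by
      refine add_le_add ?_ (mul_le_mul_of_nonneg_left (neg_le_of_abs_le hκ) (sq_nonneg m))
      have : a / (n + 2) ≤ |a| / (n + 2) := by gcongr; exact le_abs_self a
      linarith
    _ = _ := by ring

theorem exists_small_kink (a m : ℝ) (hT : 0 < T) {ε : ℝ} (hε : 0 < ε) :
    ∃ κ κ₁ κ₂ : ℝ → ℝ, HasTwoDerivs κ κ₁ κ₂ ∧ κ 0 = κ T ∧ κ₁ T = κ₁ 0 + 1 ∧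
      ∀ t ∈ Icc 0 T, |κ t| ≤ ε ∧ -ε ≤ κ₂ t + a * κ₁ t + m ^ 2 * κ t := by
  obtain ⟨n, hn⟩ := exists_nat_ge (max (|a| * T) (max (T / ε) ((|a| + m ^ 2 * T) / ε)))
  simp only [max_le_iff, div_le_iff₀ hε] at hn
  obtain ⟨hna, hnT, hnm⟩ := hn
  obtain ⟨κ, κ₁, κ₂, hκ, hper, hjump, hbound⟩ := exists_power_kink (m := m) hT hna
  have hTε : T / (n + 2) ≤ ε := by
    rw [div_le_iff₀ (by positivity)]
    linarith
  have hmε : (|a| + m ^ 2 * T) / (n + 2) ≤ ε := by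
    rw [div_le_iff₀ (by positivity)]
    linarith
  exact ⟨κ, κ₁, κ₂, hκ, hper, hjump, fun t ht =>
    ⟨(hbound t ht).1.trans hTε, (neg_le_neg hmε).trans (hbound t ht).2⟩⟩

-- Adding `J κ` with a uniformly small kink `κ` cancels the jump `J` of `x'` across the period.
theorem mul_le_of_supersolution (hT : 0 < T) (hm : m ≠ 0) (hcm : 0 ≤ cm)
    (hGc : ContinuousOn (Function.uncurry G) (Icc 0 T ×ˢ Icc 0 T)) (hG1 : PropG1 T a m G)
    (hG : ∀ t ∈ Icc 0 T, ∀ s ∈ Icc 0 T, ∀ u ∈ Icc 0 T, cm * G t u ≤ G s u)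
    {x x₁ x₂ : ℝ → ℝ} (hx : HasTwoDerivs x x₁ x₂) (hper : x 0 = x T) (hper₁ : x₁ T ≤ x₁ 0)
    (hsuper : ∀ t ∈ Icc 0 T, 0 ≤ x₂ t + a * x₁ t + m ^ 2 * x t)
    {t s : ℝ} (ht : t ∈ Icc 0 T) (hs : s ∈ Icc 0 T) : cm * x t ≤ x s := by
  set J := x₁ 0 - x₁ T
  have hJ : 0 ≤ J := sub_nonneg.2 hper₁
  have happrox {ε : ℝ} (hε : 0 < ε) :
      cm * x t ≤ x s + ε * (J + J / m ^ 2 + cm * J - cm * (J / m ^ 2)) := by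
    obtain ⟨κ, κ₁, κ₂, hκ, hκper, hκjump, hκ_le⟩ := exists_small_kink a m hT hε
    have hsum := (hx.add (hκ.const_mul J)).add_const (J * ε / m ^ 2)
    set h : ℝ → ℝ := fun t => x₂ t + J * κ₂ t + a * (x₁ t + J * κ₁ t) +
      m ^ 2 * (x t + J * κ t + J * ε / m ^ 2) with hh_def
    have hh : Continuous h := by
      have := hsum.continuous
      have := hsum.continuous_fst
      have := hsum.continuous_snd
      fun_prop
    have hsol := hsum.isLinSol (a := a) (m := m) (h := h) hT (fun _ _ => rfl)
      (by rw [hper, hκper]) (by rw [hκjump]; ring)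
    have hh0 (u : ℝ) (hu : u ∈ Icc 0 T) : 0 ≤ h u := by
      have hsplit : h u = (x₂ u + a * x₁ u + m ^ 2 * x u) +
          J * (κ₂ u + a * κ₁ u + m ^ 2 * κ u + ε) := by
        simp only [hh_def]
        field_simp
        ring
      rw [hsplit]
      exact add_nonneg (hsuper u hu) (mul_nonneg hJ (by linarith [(hκ_le u hu).2]))
    have hharnack := hsol.mul_le_of_nonneg hT.le hGc hG1 hG hh.continuousOn hh0 ht hs
    have hlo := mul_le_mul_of_nonneg_left (abs_le.1 (hκ_le t ht).1).1 (mul_nonneg hcm hJ)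
    have hhi := mul_le_mul_of_nonneg_left (abs_le.1 (hκ_le s hs).1).2 hJ
    linear_combination hharnack + hlo + hhi
  have hlim : Tendsto (fun ε => x s + ε * (J + J / m ^ 2 + cm * J - cm * (J / m ^ 2)))
      (𝓝[>] 0) (𝓝 (x s + 0 * (J + J / m ^ 2 + cm * J - cm * (J / m ^ 2)))) :=
    tendsto_nhdsWithin_of_tendsto_nhds (Continuous.tendsto (by fun_prop) 0)
  simpa using ge_of_tendsto hlim (eventually_nhdsWithin_of_forall fun ε => happrox)

/-- `u` solves `u'' + a u' = -1` on the line, vanishes at `0` and `T`, and its derivative does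
not jump upwards when `u` is continued `T`-periodically. -/
structure IsTorsionFunction (a T : ℝ) (u u₁ u₂ : ℝ → ℝ) : Prop where
  hasTwoDerivs : HasTwoDerivs u u₁ u₂
  eq : ∀ t, u₂ t + a * u₁ t = -1
  zero_left : u 0 = 0
  zero_right : u T = 0
  deriv_right_le : u₁ T ≤ u₁ 0

theorem exists_torsion_zero (hT : 0 < T) :
    ∃ u u₁ u₂, IsTorsionFunction 0 T u u₁ u₂ ∧
      1 < u (T / 2) * (π / T) ^ 2 := by
  refine ⟨fun t => t * (T - t) / 2, fun t => T / 2 - t, fun _ => -1,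
    ⟨⟨fun t => ?_, fun t => ?_, continuous_const⟩, by simp, by simp, by simp, by linarith⟩, ?_⟩
  · refine (((hasDerivAt_id t).mul ((hasDerivAt_id t).const_sub T)).div_const 2).congr_deriv ?_
    simp only [id]
    ring
  · exact (hasDerivAt_id t).const_sub _
  · have : T / 2 * (T - T / 2) / 2 * (π / T) ^ 2 = π ^ 2 / 8 := by
      field_simp
      ring
    rw [this]
    nlinarith [pi_gt_three]

theorem one_lt_torsion_midpoint_mul {a : ℝ} (ha : a ≠ 0) (hT : 0 < T) :
    1 < (T * ((1 - exp (-a * (T / 2))) / (1 - exp (-a * T))) - T / 2) / a *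
      ((π / T) ^ 2 + (a / 2) ^ 2) := by
  obtain ⟨y, hy⟩ : ∃ y, y = a * T / 4 := ⟨_, rfl⟩
  have hy0 : y ≠ 0 := by rw [hy]; positivity
  obtain rfl : a = 4 * y / T := by rw [hy]; field_simp
  calc 1 < 2 / (2 + y ^ 2) * ((π ^ 2 + 4 * y ^ 2) / 8) := by
        rw [div_mul_div_comm, one_lt_div (by positivity)]
        nlinarith [pi_gt_three]
    _ ≤ tanh y / y * ((π ^ 2 + 4 * y ^ 2) / 8) :=
        mul_le_mul_of_nonneg_right (two_div_le_tanh_div hy0) (by positivity)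
    _ = _ := by
        rw [show -(4 * y / T) * (T / 2) = -(2 * y) by field_simp; ring,
          show -(4 * y / T) * T = -(4 * y) by field_simp, one_sub_exp_div_one_sub_exp hy0]
        field_simp
        ring

theorem exists_torsion_of_ne_zero {a : ℝ} (ha : a ≠ 0) (hT : 0 < T) :
    ∃ u u₁ u₂, IsTorsionFunction a T u u₁ u₂ ∧
      1 < u (T / 2) * ((π / T) ^ 2 + (a / 2) ^ 2) := by
  set D := 1 - exp (-a * T) with hD
  have hD0 : D ≠ 0 := sub_ne_zero.2 fun h =>
    mul_ne_zero (neg_ne_zero.2 ha) hT.ne' ((exp_eq_one_iff _).1 h.symm)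
  have hexp (t : ℝ) : HasDerivAt (fun t => exp (-a * t)) (-a * exp (-a * t)) t := by
    simpa [mul_comm] using ((hasDerivAt_id t).const_mul (-a)).exp
  refine ⟨fun t => (T * ((1 - exp (-a * t)) / D) - t) / a, fun t => T * exp (-a * t) / D - 1 / a,
    fun t => -a * (T * exp (-a * t) / D),
    ⟨⟨fun t => ?_, fun t => ?_, by fun_prop⟩, fun t => ?_, by simp, ?_, ?_⟩,
    one_lt_torsion_midpoint_mul ha hT⟩
  · refine ((((((hexp t).const_sub 1).div_const D).const_mul T).sub
      (hasDerivAt_id t)).div_const a).congr_deriv ?_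
    field_simp
  · refine ((((hexp t).const_mul T).div_const D).sub_const (1 / a)).congr_deriv ?_
    ring
  · field_simp
    ring
  · simp only [← hD, div_self hD0, mul_one, sub_self, zero_div]
  · have hexpT : exp (-a * T) = 1 - D := (sub_sub_cancel _ _).symm
    have hjump : T * (1 - D) / D = T * 1 / D - T := by field_simp
    rw [hexpT, mul_zero, exp_zero, hjump]
    linarith

theorem exists_torsion (a : ℝ) (hT : 0 < T) :
    ∃ u u₁ u₂, IsTorsionFunction a T u u₁ u₂ ∧
      1 < u (T / 2) * ((π / T) ^ 2 + (a / 2) ^ 2) := by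
  rcases eq_or_ne a 0 with rfl | ha
  · simpa using exists_torsion_zero hT
  · exact exists_torsion_of_ne_zero ha hT

theorem sq_lt_neg_log_mul (hT : 0 < T) (hm : m ≠ 0) (hcm : 0 < cm)
    (hGc : ContinuousOn (Function.uncurry G) (Icc 0 T ×ˢ Icc 0 T)) (hG1 : PropG1 T a m G)
    (hG : ∀ t ∈ Icc 0 T, ∀ s ∈ Icc 0 T, ∀ u ∈ Icc 0 T, cm * G t u ≤ G s u) :
    m ^ 2 < -log cm * ((π / T) ^ 2 + (a / 2) ^ 2) := by
  obtain ⟨u, u₁, u₂, hu, hmid⟩ := exists_torsion a hT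
  have hm2 : 0 < m ^ 2 := by positivity
  have hsuper (t : ℝ) : 0 ≤ exp (m ^ 2 * u t) * (m ^ 2 * u₂ t + (m ^ 2 * u₁ t) ^ 2) +
      a * (exp (m ^ 2 * u t) * (m ^ 2 * u₁ t)) + m ^ 2 * exp (m ^ 2 * u t) := by
    calc 0 ≤ exp (m ^ 2 * u t) * (m ^ 2 * u₁ t) ^ 2 := by positivity
      _ = _ := by linear_combination -(exp (m ^ 2 * u t) * m ^ 2) * hu.eq t
  have hkey : cm * exp (m ^ 2 * u (T / 2)) ≤ exp (m ^ 2 * u 0) := by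
    refine mul_le_of_supersolution hT hm hcm.le hGc hG1 hG (hu.hasTwoDerivs.const_mul _).exp
      (by rw [hu.zero_left, hu.zero_right]) ?_ (fun t _ => hsuper t)
      ⟨by positivity, by linarith⟩ (left_mem_Icc.2 hT.le)
    rw [hu.zero_left, hu.zero_right]
    gcongr
    exact hu.deriv_right_le
  have hlog : m ^ 2 * u (T / 2) ≤ -log cm := by
    rw [hu.zero_left, mul_zero, exp_zero, ← le_div_iff₀' hcm, one_div, ← exp_log hcm,
      ← exp_neg, exp_le_exp] at hkey
    simpa using hkey
  calc m ^ 2 < m ^ 2 * (u (T / 2) * ((π / T) ^ 2 + (a / 2) ^ 2)) :=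
        lt_mul_of_one_lt_right hm2 hmid
    _ = m ^ 2 * u (T / 2) * ((π / T) ^ 2 + (a / 2) ^ 2) := (mul_assoc _ _ _).symm
    _ ≤ -log cm * ((π / T) ^ 2 + (a / 2) ^ 2) :=
        mul_le_mul_of_nonneg_right hlog (by positivity)

end KernelConstant

theorem statement10_general {T a μ c m cm A B : ℝ} {e : ℝ → ℝ} (hμ0 : 0 < μ)
    (hμ : μ ≤ 1 / 2) (hc : 0 < c) (hT : 0 < T) (he : ContinuousOn e (Icc 0 T)) (hA : 0 < A)
    (heAB : ∀ t ∈ Icc 0 T, e t ∈ Icc A B) (hm : m ≠ 0) (hcm : 0 < cm)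
    (hC6 : c ^ 2 / (μ * A ^ 2) * (B / cm ^ μ - A) ≤ m ^ 2)
    (hm_lt : m ^ 2 < (π / T) ^ 2 + (a / 2) ^ 2) {G : ℝ → ℝ → ℝ}
    (hGc : ContinuousOn (Function.uncurry G) (Icc 0 T ×ˢ Icc 0 T)) (hG1 : PropG1 T a m G)
    (hG : ∀ t ∈ Icc 0 T, ∀ s ∈ Icc 0 T, ∀ u ∈ Icc 0 T, cm * G t u ≤ G s u) :
    ∃ x : ℝ → ℝ, ContDiffOn ℝ 2 x (Icc 0 T) ∧
      (∀ t ∈ Icc 0 T, x t ∈ Icc ((A / c) ^ (1 / μ)) ((B / c) ^ (1 / μ))) ∧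
      (∀ t ∈ Icc 0 T, pd2 T x t + a * pd1 T x t =
        e t / μ * x t ^ (1 - 2 * μ) - c / μ * x t ^ (1 - μ)) ∧
      x 0 = x T ∧ pd1 T x 0 = pd1 T x T := by
  obtain ⟨hA0, hB0⟩ := heAB 0 (left_mem_Icc.2 hT.le)
  have hAB : A ≤ B := hA0.trans hB0
  have hslope := slope_lt_of_kernel_bounds hμ0 hA hAB hcm (sq_nonneg m) hC6 hm_lt
    (sq_lt_neg_log_mul hT hm hcm hGc hG1 hG)
  obtain ⟨M, hM_lo, hM_hi⟩ := exists_between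
    (max_lt hslope (lt_add_of_pos_left ((a / 2) ^ 2) (by positivity : 0 < (π / T) ^ 2)))
  obtain ⟨hM_slope, hM_a⟩ := max_lt_iff.1 hM_lo
  obtain ⟨ν, rfl⟩ : ∃ ν, M = ν ^ 2 := ⟨√M, (sq_sqrt ((sq_nonneg _).trans hM_a.le)).symm⟩
  obtain ⟨x, ⟨hx, heq, hper⟩, hx_mem⟩ :=
    exists_isLinSol_of_monotoneOn (g := fun t x => forcing μ c (e t) x + ν ^ 2 * x) hT hM_a hM_hi
      (rpow_le_rpow (by positivity) (by gcongr) (by positivity))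
      (continuousOn_forcing_add_mul hc hA he)
      (fun t ht => monotoneOn_forcing_add_mul hμ0 hμ hc hA hAB (heAB t ht).1 hM_slope.le)
      (fun t ht => le_add_of_nonneg_left (forcing_nonneg_of_le hμ0 hc hA (heAB t ht).1))
      (fun t ht => add_le_of_nonpos_left
        (forcing_nonpos_of_le hμ0 hc (hA.trans_le hAB) (heAB t ht).2))
  exact ⟨x, hx, hx_mem, fun t ht => add_right_cancel (heq t ht), hper⟩

theorem statement10 (T a μ c m cm estar estar' : ℝ) (e : ℝ → ℝ)
    (ha : 0 ≤ a) (hμ0 : 0 < μ) (hμ : μ < 1/2) (hc : 0 < c) (hT : 0 < T)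
    (he : ContinuousOn e (Set.Icc 0 T))
    (hestar : IsLeast (e '' Set.Icc 0 T) estar)
    (hestar' : IsGreatest (e '' Set.Icc 0 T) estar')
    (hC5 : 0 < estar)
    (hm : 0 < m)
    (hC6 : c ^ 2 / (μ * estar ^ 2) * (estar' / cm ^ μ - estar) ≤ m ^ 2 ∧
      m ^ 2 < (Real.pi / T) ^ 2 + (a / 2) ^ 2)
    (hcm : cm ∈ Set.Ioo (0:ℝ) 1)
    (G : ℝ → ℝ → ℝ)
    (hGc : ContinuousOn (fun p : ℝ × ℝ => G p.1 p.2) (Set.Icc 0 T ×ˢ Set.Icc 0 T))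
    (hG1 : PropG1 T a m G)
    (hGpos : ∀ t ∈ Set.Icc 0 T, ∀ u ∈ Set.Icc 0 T, 0 < G t u)
    (hG3 : ∀ t ∈ Set.Icc 0 T, (∫ u in (0:ℝ)..T, G t u) = 1 / m ^ 2)
    (hG4 : ∀ t ∈ Set.Icc 0 T, ∀ u ∈ Set.Icc 0 T, G u u ≤ G t u ∧ cm * G t u ≤ G u u) :
    ∃ x : ℝ → ℝ, ContDiffOn ℝ 2 x (Set.Icc 0 T) ∧
      (∀ t ∈ Set.Icc 0 T, 0 < x t ∧ x t ≤ (1 / cm) * (estar' / c) ^ (1 / μ)) ∧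
      (∀ t ∈ Set.Icc 0 T,
        pd2 T x t + a * pd1 T x t =
          (e t / μ) * x t ^ (1 - 2 * μ) - (c / μ) * x t ^ (1 - μ)) ∧
      x 0 = x T ∧ pd1 T x 0 = pd1 T x T := by
  have heAB (t : ℝ) (ht : t ∈ Icc 0 T) : e t ∈ Icc estar estar' :=
    ⟨hestar.2 (mem_image_of_mem e ht), hestar'.2 (mem_image_of_mem e ht)⟩
  have hG (t : ℝ) (ht : t ∈ Icc 0 T) (s : ℝ) (hs : s ∈ Icc 0 T) (u : ℝ) (hu : u ∈ Icc 0 T) :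
      cm * G t u ≤ G s u := (hG4 t ht u hu).2.trans (hG4 s hs u hu).1
  obtain ⟨x, hx, hx_mem, heq⟩ := statement10_general hμ0 hμ.le hc hT he hC5 heAB hm.ne' hcm.1
    hC6.1 hC6.2 hGc hG1 hG
  refine ⟨x, hx, fun t ht => ⟨(rpow_pos_of_pos (div_pos hC5 hc) _).trans_le (hx_mem t ht).1,
    (hx_mem t ht).2.trans (le_mul_of_one_le_left ?_ (one_le_one_div hcm.1 hcm.2.le))⟩, heq⟩
  obtain ⟨t, ht, rfl⟩ := hestar'.1
  exact rpow_nonneg (div_nonneg (hC5.le.trans (heAB t ht).1) hc.le) _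
end
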